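/- arXiv:2006.09076 — 4 statements merged into one kernel-verified Lean document; each statement's English description precedes it below -/
import Mathlib

section
/- Shuffle product formula for multiple zeta values: let k=(k_1,…,k_a) and l=(l_1,…,l_b) be nonempty admissible indices. Then ζ(k)·ζ(l) = Σ_h c_h·ζ(h), where h runs over the (finitely many) nonempty admissible indices such that the word w(h) occurs in the shuffle product w(k)⧢w(l), and c_h is its integer coefficient. -/
open scoped Classical

noncomputable section

/-- Multiple zeta value of an index `k = (k₁, …, kₐ)`:
`ζ(k) = Σ_{0 < n₁ < ⋯ < nₐ} ∏ nᵢ^(-kᵢ)`, as a `tsum` of reals. -/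
def mzv (k : List ℕ) : ℝ :=
  ∑' n : Fin k.length → ℕ,
    Set.indicator {n : Fin k.length → ℕ | (∀ i, 0 < n i) ∧ StrictMono n}
      (fun n => ∏ i, ((n i : ℝ) ^ k.get i)⁻¹) n

/-- The word (over the alphabet `{x, y}`, encoded with `y = true`, `x = false`)
attached to an index: `w(k) = y x^(k₁-1) y x^(k₂-1) ⋯ y x^(kₐ-1)`. -/
def word (k : List ℕ) : List Bool :=
  k.flatMap fun ki => true :: List.replicate (ki - 1) false

/-- The index attached to a word (left inverse of `word` on words beginning with `y`). -/
def wordToIndex (w : List Bool) : List ℕ :=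
  w.foldl (fun acc b => if b then acc.concat 1 else acc.dropLast.concat (acc.getLast! + 1)) []

/-- The shuffle product of two words, as a formal `ℤ`-linear combination of words:
`1 ⧢ w = w ⧢ 1 = w` and `(au) ⧢ (bv) = a (u ⧢ bv) + b (au ⧢ v)`. -/
def shuffle : List Bool → List Bool → (List Bool →₀ ℤ)
  | [], w => Finsupp.single w 1
  | a :: u, [] => Finsupp.single (a :: u) 1
  | a :: u, b :: v =>
      (shuffle u (b :: v)).mapDomain (List.cons a) +
        (shuffle (a :: u) v).mapDomain (List.cons b)
  termination_by u v => u.length + v.length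

/-!
Let `L_w` be the multiple polylogarithm of a word `w`, so that `ζ(k)` is `L_w` evaluated at `z = 1`
for `w = w(k)`: its coefficients are the sums over `n₁ < ⋯ < nₐ` with `nₐ` fixed. The operator
`θ = z d/dz` strips the last letter of `w`, turning it into a factor `z / (1 - z)` or `1`. Since
shuffles obey the same recursion in the last letters as in the first ones, `L_u L_v` and the
combination of the `L_w` along `u ⧢ v` have, by the Leibniz rule and induction, the same image under
`θ`; as they also have the same constant term, they agree as formal power series. The identity may
be evaluated at `z = 1` because the coefficients of `L_w` are `O(n^(-1/2))` (a bound which survives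
appending a letter, since `∑_{m ≤ n} m^(-1/2) = O(n^(1/2))`), so that the coefficients of `L_w` for
`w` ending in `x` are `O(n^(-3/2))`.
-/

open PowerSeries

section Shuffle

theorem shuffle_nil_right (u : List Bool) : shuffle u [] = Finsupp.single u 1 := by
  cases u <;> simp [shuffle]

theorem shuffle_concat_concat (u v : List Bool) (a b : Bool) :
    shuffle (u ++ [a]) (v ++ [b]) =
      (shuffle u (v ++ [b])).mapDomain (· ++ [a]) +
        (shuffle (u ++ [a]) v).mapDomain (· ++ [b]) := by
  induction u generalizing v with
  | nil =>
    induction v with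
    | nil => simp [shuffle, add_comm]
    | cons d v ihv =>
      simp only [List.nil_append, List.cons_append] at ihv ⊢
      rw [shuffle.eq_3, ihv]
      simp only [shuffle, Finsupp.mapDomain_add, Finsupp.mapDomain_single,
        ← Finsupp.mapDomain_comp, Function.comp_def, List.cons_append]
      abel
  | cons c u ihu =>
    induction v with
    | nil =>
      have ihu := ihu []
      simp only [List.nil_append, List.cons_append, shuffle_nil_right] at ihu ⊢
      rw [shuffle, ihu]
      simp only [shuffle, shuffle_nil_right, Finsupp.mapDomain_add, Finsupp.mapDomain_single,
        ← Finsupp.mapDomain_comp, Function.comp_def, List.cons_append]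
      abel
    | cons d v ihv =>
      have ihu := ihu (d :: v)
      simp only [List.cons_append] at ihu ihv ⊢
      rw [shuffle, ihu, ihv]
      simp only [shuffle, Finsupp.mapDomain_add, ← Finsupp.mapDomain_comp, Function.comp_def,
        List.cons_append]
      abel

theorem mem_support_mapDomain_add_mapDomain {α β M : Type*} [AddCommMonoid M] {f g : α → β}
    {p q : α →₀ M} {x : β} (hx : x ∈ (p.mapDomain f + q.mapDomain g).support) :
    (∃ y ∈ p.support, f y = x) ∨ ∃ y ∈ q.support, g y = x :=
  (Finset.mem_union.1 (Finsupp.support_add hx)).imp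
    (fun h => Finset.mem_image.1 (Finsupp.mapDomain_support h))
    (fun h => Finset.mem_image.1 (Finsupp.mapDomain_support h))

theorem perm_append_of_mem_support_shuffle {u v w : List Bool} (hw : w ∈ (shuffle u v).support) :
    w.Perm (u ++ v) := by
  induction u, v using shuffle.induct generalizing w with
  | case1 v =>
    rw [shuffle] at hw
    obtain rfl : w = v := by simpa using Finsupp.support_single_subset hw
    rfl
  | case2 a u =>
    rw [shuffle] at hw
    obtain rfl : w = a :: u := by simpa using Finsupp.support_single_subset hw
    simp
  | case3 a u b v ihu ihv =>
    rw [shuffle] at hw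
    obtain ⟨w', hw', rfl⟩ | ⟨w', hw', rfl⟩ := mem_support_mapDomain_add_mapDomain hw
    · exact (ihu hw').cons a
    · exact ((ihv hw').cons b).trans List.perm_middle.symm

theorem head?_of_mem_support_shuffle {u v w : List Bool} (hw : w ∈ (shuffle u v).support) :
    w.head? = u.head? ∨ w.head? = v.head? := by
  rcases u with _ | ⟨a, u⟩
  · rw [shuffle] at hw
    obtain rfl : w = v := by simpa using Finsupp.support_single_subset hw
    exact .inr rfl
  rcases v with _ | ⟨b, v⟩
  · rw [shuffle] at hw
    obtain rfl : w = a :: u := by simpa using Finsupp.support_single_subset hw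
    exact .inl rfl
  rw [shuffle] at hw
  obtain ⟨w, -, rfl⟩ | ⟨w, -, rfl⟩ := mem_support_mapDomain_add_mapDomain hw
  · exact .inl rfl
  · exact .inr rfl

theorem head?_concat_ne_of_mem_support_shuffle {u v w : List Bool} {a c : Bool}
    (hw : w ∈ (shuffle u v).support) (huv : u ++ v ≠ []) (hu : u.head? ≠ some c)
    (hv : v.head? ≠ some c) : (w ++ [a]).head? ≠ some c := by
  have hne : w ≠ [] := by
    rintro rfl
    exact huv (perm_append_of_mem_support_shuffle hw).nil_eq.symm
  rw [List.head?_append_of_ne_nil _ hne]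
  rcases head?_of_mem_support_shuffle hw with h | h <;> rwa [h]

theorem getLast?_of_mem_support_shuffle {u v w : List Bool} (hw : w ∈ (shuffle u v).support) :
    w.getLast? = u.getLast? ∨ w.getLast? = v.getLast? := by
  obtain rfl | ⟨u, a, rfl⟩ := u.eq_nil_or_concat'
  · rw [shuffle] at hw
    obtain rfl : w = v := by simpa using Finsupp.support_single_subset hw
    exact .inr rfl
  obtain rfl | ⟨v, b, rfl⟩ := v.eq_nil_or_concat'
  · rw [shuffle_nil_right] at hw
    obtain rfl : w = u ++ [a] := by simpa using Finsupp.support_single_subset hw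
    exact .inl rfl
  rw [shuffle_concat_concat] at hw
  obtain ⟨w, -, rfl⟩ | ⟨w, -, rfl⟩ := mem_support_mapDomain_add_mapDomain hw
  · exact .inl (by simp)
  · exact .inr (by simp)

end Shuffle

section Words

theorem word_concat (k : List ℕ) (j : ℕ) :
    word (k ++ [j]) = word k ++ true :: List.replicate (j - 1) false := by
  simp [word]

theorem head?_word_ne (k : List ℕ) : (word k).head? ≠ some false := by
  cases k <;> simp [word]

/-- The words spanning the algebra `ℚ + y 𝔥 x` of admissible words: those which neither begin with
`x` nor end with `y`. The empty word is one of them. -/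
structure IsAdmissibleWord (w : List Bool) : Prop where
  head?_ne : w.head? ≠ some false
  getLast?_ne : w.getLast? ≠ some true

theorem isAdmissibleWord_word {k : List ℕ} (hk : k ≠ []) (hk2 : 2 ≤ k.getLast hk) :
    IsAdmissibleWord (word k) := by
  refine ⟨head?_word_ne k, ?_⟩
  obtain ⟨k, j, rfl⟩ := k.eq_nil_or_concat'.resolve_left hk
  obtain ⟨j, rfl⟩ := Nat.exists_eq_add_of_le' (by simpa using hk2 : 2 ≤ j)
  simp [word_concat, List.getLast?_cons, List.getLast?_replicate]

theorem IsAdmissibleWord.of_mem_support_shuffle {u v w : List Bool} (hu : IsAdmissibleWord u)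
    (hv : IsAdmissibleWord v) (hw : w ∈ (shuffle u v).support) : IsAdmissibleWord w where
  head?_ne := by
    rcases head?_of_mem_support_shuffle hw with h | h <;> rw [h]
    exacts [hu.head?_ne, hv.head?_ne]
  getLast?_ne := by
    rcases getLast?_of_mem_support_shuffle hw with h | h <;> rw [h]
    exacts [hu.getLast?_ne, hv.getLast?_ne]

theorem wordToIndex_concat_true (w : List Bool) :
    wordToIndex (w ++ [true]) = wordToIndex w ++ [1] := by
  simp [wordToIndex]

theorem wordToIndex_concat_false {w : List Bool} {k : List ℕ} {j : ℕ}
    (hw : wordToIndex w = k ++ [j]) : wordToIndex (w ++ [false]) = k ++ [j + 1] := by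
  have hfold : wordToIndex (w ++ [false]) =
      (wordToIndex w).dropLast.concat ((wordToIndex w).getLast! + 1) := by
    rw [wordToIndex, List.foldl_append]
    rfl
  simp [hfold, hw, List.getLast!_eq_getLast?_getD]

theorem word_wordToIndex_and_one_le {w : List Bool} (hw : w.head? ≠ some false) :
    word (wordToIndex w) = w ∧ ∀ i ∈ wordToIndex w, 1 ≤ i := by
  induction w using List.reverseRecOn with
  | nil => simp [wordToIndex, word]
  | append_singleton w a ih =>
    obtain ⟨hword, hpos⟩ := ih (by cases w <;> simp_all)
    cases a with
    | true =>
      rw [wordToIndex_concat_true, word_concat, hword]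
      refine ⟨rfl, ?_⟩
      simpa [or_imp, forall_and] using hpos
    | false =>
      have hne : wordToIndex w ≠ [] := fun h => by
        rw [h] at hword
        simp [← hword, word] at hw
      obtain ⟨k, j, hkj⟩ := (wordToIndex w).eq_nil_or_concat'.resolve_left hne
      rw [hkj] at hword hpos
      obtain ⟨j, rfl⟩ := Nat.exists_eq_add_of_le' (hpos j (by simp))
      rw [wordToIndex_concat_false hkj, ← hword, word_concat, word_concat]
      refine ⟨by simp [List.replicate_succ'], ?_⟩
      simp only [List.mem_append, List.mem_singleton, or_imp, forall_and, forall_eq] at hpos ⊢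
      exact ⟨hpos.1, by lia⟩

end Words

section EulerDerivation

variable (R : Type*) [CommSemiring R]

/-- The Euler operator `θ = z d/dz` on power series. -/
def eulerDerivation : Derivation R R⟦X⟧ R⟦X⟧ :=
  (X : R⟦X⟧) • derivative R

variable {R}

theorem coeff_eulerDerivation (f : R⟦X⟧) (n : ℕ) :
    coeff n (eulerDerivation R f) = n * coeff n f := by
  cases n <;> simp [eulerDerivation, coeff_derivative, mul_comm, coeff_succ_X_mul]

theorem eulerDerivation_ext {R : Type*} [CommRing R] [IsAddTorsionFree R] {f g : R⟦X⟧}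
    (hθ : eulerDerivation R f = eulerDerivation R g)
    (h0 : constantCoeff f = constantCoeff g) : f = g :=
  derivative.ext (X_mul_cancel hθ) h0

end EulerDerivation

section Polylog

variable (K : Type*) [Field K]

/-- The differential form of a letter, multiplied by `z / dz`: the letter `y` stands for
`dz / (1 - z)` and the letter `x` for `dz / z`. -/
def letterSeries : Bool → K⟦X⟧
  | true => X * mk 1
  | false => 1

/-- The multiple polylogarithm of a word, as the iterated integral of the forms of its letters
expanded at `0`; the last letter is the outermost integration. The `n`-th coefficient of `∫ f dz/z`
is that of `f` divided by `n`, which is `0` for `n = 0`, so a leading `x` gives `0` in place of a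
logarithm. -/
def polylog (w : List Bool) : K⟦X⟧ :=
  w.foldl (fun f a => mk fun n => coeff n (letterSeries K a * f) / n) 1

theorem polylog_nil : polylog K [] = 1 := rfl

variable {K}

theorem coeff_polylog_concat (w : List Bool) (a : Bool) (n : ℕ) :
    coeff n (polylog K (w ++ [a])) = coeff n (letterSeries K a * polylog K w) / n := by
  simp [polylog]

theorem coeff_letterSeries_true_mul (f : K⟦X⟧) (n : ℕ) :
    coeff n (letterSeries K true * f) = ∑ m ∈ Finset.range n, coeff m f := by
  cases n with
  | zero => simp [letterSeries]
  | succ n =>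
    rw [letterSeries, mul_assoc, coeff_succ_X_mul, mul_comm, coeff_mul,
      Finset.Nat.sum_antidiagonal_eq_sum_range_succ_mk]
    simp

theorem constantCoeff_polylog {w : List Bool} (hw : w ≠ []) : constantCoeff (polylog K w) = 0 := by
  obtain ⟨w, a, rfl⟩ := w.eq_nil_or_concat'.resolve_left hw
  rw [← coeff_zero_eq_constantCoeff_apply, coeff_polylog_concat]
  simp

theorem coeff_polylog_append_block (w : List Bool) (j n : ℕ) :
    coeff n (polylog K (w ++ true :: List.replicate j false)) =
      (∑ m ∈ Finset.range n, coeff m (polylog K w)) / (n : K) ^ (j + 1) := by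
  induction j with
  | zero => simp [coeff_polylog_concat, coeff_letterSeries_true_mul]
  | succ j ih =>
    rw [List.replicate_succ', ← List.cons_append, ← List.append_assoc, coeff_polylog_concat,
      letterSeries, one_mul, ih, div_div, ← pow_succ]

theorem eulerDerivation_polylog_concat [CharZero K] {w : List Bool} {a : Bool}
    (hw : (w ++ [a]).head? ≠ some false) :
    eulerDerivation K (polylog K (w ++ [a])) = letterSeries K a * polylog K w := by
  ext n
  rw [coeff_eulerDerivation, coeff_polylog_concat]
  rcases eq_or_ne n 0 with rfl | hn
  · have h0 : constantCoeff (letterSeries K a * polylog K w) = 0 := by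
      cases a with
      | true => simp [letterSeries]
      | false =>
        have hne : w ≠ [] := by rintro rfl; simp at hw
        rw [map_mul, constantCoeff_polylog hne, mul_zero]
    simp [h0]
  · field_simp

theorem eulerDerivation_linearCombination_polylog_concat [CharZero K] {p : List Bool →₀ ℤ}
    {a : Bool} (hp : ∀ w ∈ p.support, (w ++ [a]).head? ≠ some false) :
    eulerDerivation K (Finsupp.linearCombination ℤ (polylog K) (p.mapDomain (· ++ [a]))) =
      letterSeries K a * Finsupp.linearCombination ℤ (polylog K) p := by
  rw [Finsupp.linearCombination_mapDomain, Finsupp.linearCombination_apply,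
    Finsupp.linearCombination_apply, map_finsuppSum, Finsupp.mul_sum]
  refine Finsupp.sum_congr fun w hw => ?_
  rw [map_zsmul, Function.comp_apply, eulerDerivation_polylog_concat (hp w hw), mul_smul_comm]

theorem constantCoeff_linearCombination_polylog {p : List Bool →₀ ℤ} (hp : [] ∉ p.support) :
    constantCoeff (Finsupp.linearCombination ℤ (polylog K) p) = 0 := by
  rw [Finsupp.linearCombination_apply, map_finsuppSum]
  refine Finset.sum_eq_zero fun w hw => ?_
  simp only [map_zsmul]
  rw [constantCoeff_polylog (ne_of_mem_of_not_mem hw hp), smul_zero]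

theorem polylog_mul_polylog [CharZero K] {u v : List Bool} (hu : u.head? ≠ some false)
    (hv : v.head? ≠ some false) :
    polylog K u * polylog K v = Finsupp.linearCombination ℤ (polylog K) (shuffle u v) := by
  induction u using List.reverseRecOn generalizing v with
  | nil => simp [polylog_nil, shuffle]
  | append_singleton u a ihu =>
    induction v using List.reverseRecOn with
    | nil => simp [polylog_nil, shuffle_nil_right]
    | append_singleton v b ihv =>
      have hu' : u.head? ≠ some false := by cases u <;> simp_all
      have hv' : v.head? ≠ some false := by cases v <;> simp_all
      have hl : ∀ w ∈ (shuffle u (v ++ [b])).support, (w ++ [a]).head? ≠ some false := fun w hw =>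
        head?_concat_ne_of_mem_support_shuffle hw (by simp) hu' hv
      have hr : ∀ w ∈ (shuffle (u ++ [a]) v).support, (w ++ [b]).head? ≠ some false := fun w hw =>
        head?_concat_ne_of_mem_support_shuffle hw (by simp) hu hv'
      apply eulerDerivation_ext
      · rw [Derivation.leibniz, eulerDerivation_polylog_concat hu,
          eulerDerivation_polylog_concat hv, shuffle_concat_concat, map_add, map_add,
          eulerDerivation_linearCombination_polylog_concat hl,
          eulerDerivation_linearCombination_polylog_concat hr, ← ihu hu' hv, ← ihv hv']
        simp only [smul_eq_mul]
        ring
      · rw [map_mul, constantCoeff_polylog (by simp), zero_mul,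
          constantCoeff_linearCombination_polylog]
        intro h
        simpa using perm_append_of_mem_support_shuffle h

theorem coeff_polylog_nonneg [LinearOrder K] [IsStrictOrderedRing K] (w : List Bool) (n : ℕ) :
    0 ≤ coeff n (polylog K w) := by
  induction w using List.reverseRecOn generalizing n with
  | nil =>
    rw [polylog_nil, coeff_one]
    split_ifs <;> simp
  | append_singleton w a ih =>
    rw [coeff_polylog_concat]
    refine div_nonneg ?_ n.cast_nonneg
    cases a with
    | true => exact coeff_letterSeries_true_mul (K := K) _ _ ▸ Finset.sum_nonneg fun m _ => ih m
    | false => simpa [letterSeries] using ih n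

end Polylog

section Convergence

theorem sum_range_inv_sqrt_succ_le (n : ℕ) :
    ∑ m ∈ Finset.range n, (√(m + 1 : ℝ))⁻¹ ≤ 2 * √n := by
  induction n with
  | zero => simp
  | succ n ih =>
    have hpos : 0 < √(n + 1 : ℝ) := Real.sqrt_pos.2 (by positivity)
    have hstep : (√(n + 1 : ℝ))⁻¹ ≤ 2 * (√(n + 1 : ℝ) - √n) := by
      rw [inv_le_iff_one_le_mul₀ hpos]
      nlinarith [sq_nonneg (√(n + 1 : ℝ) - √n), Real.sq_sqrt (Nat.cast_nonneg n : (0 : ℝ) ≤ n),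
        Real.sq_sqrt (by positivity : (0 : ℝ) ≤ n + 1)]
    rw [Finset.sum_range_succ, Nat.cast_succ]
    linarith

theorem coeff_letterSeries_mul_le {f : ℝ⟦X⟧} {C : ℝ} (hC : 0 ≤ C)
    (hf : ∀ n, coeff n f ≤ C * (√(n + 1 : ℝ))⁻¹) (a : Bool) {n : ℕ} (hn : n ≠ 0) :
    coeff n (letterSeries ℝ a * f) ≤ C * (2 * √n) := by
  cases a with
  | true =>
    calc coeff n (letterSeries ℝ true * f) = ∑ m ∈ Finset.range n, coeff m f :=
          coeff_letterSeries_true_mul f n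
      _ ≤ ∑ m ∈ Finset.range n, C * (√(m + 1 : ℝ))⁻¹ := Finset.sum_le_sum fun m _ => hf m
      _ = C * ∑ m ∈ Finset.range n, (√(m + 1 : ℝ))⁻¹ := (Finset.mul_sum ..).symm
      _ ≤ C * (2 * √n) := by gcongr; exact sum_range_inv_sqrt_succ_le n
  | false =>
    have hn1 : (1 : ℝ) ≤ √n := Real.one_le_sqrt.2 (by exact_mod_cast Nat.one_le_iff_ne_zero.2 hn)
    have hinv : (√(n + 1 : ℝ))⁻¹ ≤ 1 :=
      inv_le_one_of_one_le₀ (Real.one_le_sqrt.2 (by simp))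
    rw [letterSeries, one_mul]
    refine (hf n).trans ?_
    gcongr
    linarith

theorem exists_coeff_polylog_le (w : List Bool) :
    ∃ C : ℝ, 0 ≤ C ∧ ∀ n, coeff n (polylog ℝ w) ≤ C * (√(n + 1 : ℝ))⁻¹ := by
  induction w using List.reverseRecOn with
  | nil =>
    refine ⟨1, zero_le_one, fun n => ?_⟩
    rw [polylog_nil, coeff_one]
    split_ifs with hn
    · simp [hn]
    · positivity
  | append_singleton w a ih =>
    obtain ⟨C, hC, hw⟩ := ih
    refine ⟨C * 4, by positivity, fun n => ?_⟩
    rw [coeff_polylog_concat]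
    rcases eq_or_ne n 0 with rfl | hn
    · simpa using hC
    have hn0 : (0 : ℝ) < n := by positivity
    have hsqrt : √(n + 1 : ℝ) ≤ 2 * √n := by
      have hn1 : (1 : ℝ) ≤ n := by exact_mod_cast Nat.one_le_iff_ne_zero.2 hn
      rw [Real.sqrt_le_left (by positivity), mul_pow, Real.sq_sqrt hn0.le]
      linarith
    calc coeff n (letterSeries ℝ a * polylog ℝ w) / n ≤ C * (2 * √n) / n := by
          gcongr; exact coeff_letterSeries_mul_le hC hw a hn
      _ = C * 4 * (2 * √n)⁻¹ := by
          nth_rewrite 2 [← Real.mul_self_sqrt hn0.le]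
          field_simp
          norm_num
      _ ≤ C * 4 * (√(n + 1 : ℝ))⁻¹ := by gcongr

theorem summable_coeff_polylog {w : List Bool} (hw : w.getLast? ≠ some true) :
    Summable fun n => coeff n (polylog ℝ w) := by
  obtain rfl | ⟨w, a, rfl⟩ := w.eq_nil_or_concat'
  · refine summable_of_ne_finset_zero (s := {0}) fun n hn => ?_
    rw [polylog_nil, coeff_one, if_neg (by simpa using hn)]
  obtain rfl : a = false := by simpa using hw
  obtain ⟨C, hC, hbound⟩ := exists_coeff_polylog_le w
  have hsum : Summable fun n : ℕ => C * ((n : ℝ) ^ (3 / 2 : ℝ))⁻¹ :=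
    (Real.summable_nat_rpow_inv.2 (by norm_num)).mul_left C
  refine hsum.of_nonneg_of_le (coeff_polylog_nonneg _) fun n => ?_
  rw [coeff_polylog_concat, letterSeries, one_mul]
  rcases eq_or_ne n 0 with rfl | hn
  · simp
  have hpow : (n : ℝ) ^ (3 / 2 : ℝ) = √n * n := by
    rw [Real.sqrt_eq_rpow, ← Real.rpow_add_one (by positivity)]
    norm_num
  calc coeff n (polylog ℝ w) / n ≤ C * (√(n + 1 : ℝ))⁻¹ / n := by gcongr; exact hbound n
    _ ≤ C * (√(n : ℝ))⁻¹ / n := by gcongr; linarith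
    _ = C * ((n : ℝ) ^ (3 / 2 : ℝ))⁻¹ := by rw [hpow, mul_inv, mul_div_assoc, div_eq_mul_inv]

/-- The value at `z = 1` of the multiple polylogarithm of a word, that is, the multiple zeta value
of an admissible word. -/
def polylogOne (w : List Bool) : ℝ :=
  ∑' n, coeff n (polylog ℝ w)

theorem polylogOne_mul_polylogOne {u v : List Bool} (hu : IsAdmissibleWord u)
    (hv : IsAdmissibleWord v) :
    polylogOne u * polylogOne v = Finsupp.linearCombination ℤ polylogOne (shuffle u v) := by
  have hprod (n : ℕ) : ∑ p ∈ Finset.HasAntidiagonal.antidiagonal n,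
      coeff p.1 (polylog ℝ u) * coeff p.2 (polylog ℝ v) =
        ∑ w ∈ (shuffle u v).support, shuffle u v w • coeff n (polylog ℝ w) := by
    rw [← coeff_mul, polylog_mul_polylog hu.head?_ne hv.head?_ne, Finsupp.linearCombination_apply,
      map_finsuppSum]
    simp only [map_zsmul, Finsupp.sum]
  have hsum {w : List Bool} (hw : w ∈ (shuffle u v).support) :
      Summable fun n => coeff n (polylog ℝ w) :=
    summable_coeff_polylog (hu.of_mem_support_shuffle hv hw).getLast?_ne
  calc polylogOne u * polylogOne v
      = ∑' n, ∑ w ∈ (shuffle u v).support, shuffle u v w • coeff n (polylog ℝ w) := by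
        simp_rw [← hprod]
        exact tsum_mul_tsum_eq_tsum_sum_antidiagonal_of_summable_norm
          (summable_coeff_polylog hu.getLast?_ne).norm (summable_coeff_polylog hv.getLast?_ne).norm
    _ = ∑ w ∈ (shuffle u v).support, ∑' n, shuffle u v w • coeff n (polylog ℝ w) :=
        Summable.tsum_finsetSum fun w hw => (hsum hw).const_smul _
    _ = ∑ w ∈ (shuffle u v).support, shuffle u v w • polylogOne w :=
        Finset.sum_congr rfl fun w hw => (hsum hw).tsum_const_smul _

end Convergence

section ZetaTails

open scoped ENNReal

/-- The tail `Σ_{m < n₁ < ⋯ < nₐ} ∏ nᵢ^(-kᵢ)` of a multiple zeta value, in `ℝ≥0∞` so that it obeys a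
recursion in `k` without convergence hypotheses. -/
def mzvTail (k : List ℕ) (m : ℕ) : ℝ≥0∞ :=
  ∑' n : Fin k.length → ℕ,
    Set.indicator {n : Fin k.length → ℕ | (∀ i, m < n i) ∧ StrictMono n}
      (fun n => ∏ i, ((n i : ℝ≥0∞) ^ k.get i)⁻¹) n

theorem toReal_mzvTail_zero (k : List ℕ) : (mzvTail k 0).toReal = mzv k := by
  rw [mzvTail, ENNReal.tsum_toReal_eq, mzv]
  · refine tsum_congr fun n => ?_
    simp only [Set.indicator_apply]
    split_ifs <;> simp [ENNReal.toReal_prod]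
  · intro n
    rw [Set.indicator_apply]
    split_ifs with hn
    · refine ENNReal.prod_ne_top fun i _ => ?_
      simp [(hn.1 i).ne']
    · simp

theorem mzvTail_nil (m : ℕ) : mzvTail [] m = 1 := by
  simp [mzvTail, Subsingleton.strictMono]

theorem forall_lt_and_strictMono_cons_iff {a m n : ℕ} {t : Fin a → ℕ} :
    ((∀ i, m < (Fin.cons n t : Fin (a + 1) → ℕ) i) ∧
      StrictMono (Fin.cons n t : Fin (a + 1) → ℕ)) ↔
      m < n ∧ (∀ i, n < t i) ∧ StrictMono t := by
  simp only [Fin.forall_fin_succ, Fin.cons_zero, Fin.cons_succ, StrictMono, Fin.succ_lt_succ_iff,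
    Fin.succ_pos, Fin.not_lt_zero, IsEmpty.forall_iff, forall_const, true_and]
  exact ⟨fun ⟨hm, ht⟩ => ⟨hm.1, ht⟩, fun ⟨hmn, ht⟩ => ⟨⟨hmn, fun i => hmn.trans (ht.1 i)⟩, ht⟩⟩

theorem mzvTail_cons (j : ℕ) (k : List ℕ) (m : ℕ) :
    mzvTail (j :: k) m =
      ∑' n, (Set.Ioi m).indicator (fun n : ℕ => ((n : ℝ≥0∞) ^ j)⁻¹ * mzvTail k n) n := by
  rw [mzvTail]
  refine ((Fin.consEquiv fun _ : Fin (k.length + 1) => ℕ).tsum_eq _).symm.trans ?_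
  rw [ENNReal.tsum_prod']
  refine tsum_congr fun n => ?_
  by_cases hn : m < n
  · rw [Set.indicator_of_mem (Set.mem_Ioi.2 hn), mzvTail, ← ENNReal.tsum_mul_left]
    refine tsum_congr fun t => ?_
    simp [Set.indicator_apply, Fin.consEquiv, forall_lt_and_strictMono_cons_iff, hn,
      Fin.prod_univ_succ]
  · simp [Fin.consEquiv, forall_lt_and_strictMono_cons_iff, hn]

theorem tsum_mul_tsum_indicator_Ioi (c g : ℕ → ℝ≥0∞) :
    ∑' m, c m * ∑' n, (Set.Ioi m).indicator g n = ∑' n, (∑ m ∈ Finset.range n, c m) * g n := by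
  simp_rw [← ENNReal.tsum_mul_left]
  rw [ENNReal.tsum_comm]
  refine tsum_congr fun n => ?_
  rw [tsum_eq_sum (s := Finset.range n), Finset.sum_mul]
  · refine Finset.sum_congr rfl fun m hm => ?_
    rw [Set.indicator_of_mem (Set.mem_Ioi.2 (Finset.mem_range.1 hm))]
  · intro m hm
    rw [Set.indicator_of_notMem (by simpa using hm), mul_zero]

theorem tsum_ofReal_coeff_polylog_append_word {k : List ℕ} (hk : ∀ i ∈ k, 1 ≤ i) (w : List Bool) :
    ∑' n, ENNReal.ofReal (coeff n (polylog ℝ (w ++ word k))) =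
      ∑' m, ENNReal.ofReal (coeff m (polylog ℝ w)) * mzvTail k m := by
  induction k generalizing w with
  | nil => simp [word, mzvTail_nil]
  | cons j k ih =>
    obtain ⟨j, rfl⟩ := Nat.exists_eq_add_of_le' (hk j (by simp))
    have hword : w ++ word ((j + 1) :: k) = (w ++ true :: List.replicate j false) ++ word k := by
      simp [word]
    simp_rw [hword, ih (fun i hi => hk i (by simp [hi])), mzvTail_cons,
      tsum_mul_tsum_indicator_Ioi]
    refine tsum_congr fun n => ?_
    rw [coeff_polylog_append_block]
    rcases eq_or_ne n 0 with rfl | hn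
    · simp
    rw [ENNReal.ofReal_div_of_pos (by positivity),
      ENNReal.ofReal_sum_of_nonneg fun m _ => coeff_polylog_nonneg w m,
      ENNReal.ofReal_pow n.cast_nonneg, ENNReal.ofReal_natCast, div_eq_mul_inv, mul_assoc]

theorem mzv_eq_polylogOne_word {k : List ℕ} (hk : ∀ i ∈ k, 1 ≤ i) :
    mzv k = polylogOne (word k) := by
  have htail : ∑' n, ENNReal.ofReal (coeff n (polylog ℝ (word k))) = mzvTail k 0 := by
    have happend := tsum_ofReal_coeff_polylog_append_word hk []
    rw [List.nil_append] at happend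
    rw [happend, tsum_eq_single 0 fun m hm => by simp [polylog_nil, coeff_one, hm]]
    simp [polylog_nil]
  rw [← toReal_mzvTail_zero, ← htail, ENNReal.tsum_toReal_eq fun n => ENNReal.ofReal_ne_top]
  simp only [ENNReal.toReal_ofReal (coeff_polylog_nonneg _ _), polylogOne]

theorem mzv_wordToIndex {w : List Bool} (hw : w.head? ≠ some false) :
    mzv (wordToIndex w) = polylogOne w := by
  obtain ⟨hword, hpos⟩ := word_wordToIndex_and_one_le hw
  rw [mzv_eq_polylogOne_word hpos, hword]

end ZetaTails

/-- **Shuffle product formula for multiple zeta values.**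
For nonempty admissible indices `k`, `l`,
`ζ(k)·ζ(l) = Σ_h c_h ζ(h)`, where `h` runs over the (admissible) indices whose word
occurs in `w(k) ⧢ w(l)` and `c_h` is its integer coefficient. -/
theorem shuffle_product_formula (k l : List ℕ)
    (hk : k ≠ []) (hk1 : ∀ i ∈ k, 1 ≤ i) (hka : 2 ≤ k.getLast hk)
    (hl : l ≠ []) (hl1 : ∀ i ∈ l, 1 ≤ i) (hla : 2 ≤ l.getLast hl) :
    mzv k * mzv l =
      ∑ w ∈ (shuffle (word k) (word l)).support,
        ((shuffle (word k) (word l) w : ℤ) : ℝ) * mzv (wordToIndex w) := by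
  have hk' : IsAdmissibleWord (word k) := isAdmissibleWord_word hk hka
  have hl' : IsAdmissibleWord (word l) := isAdmissibleWord_word hl hla
  rw [mzv_eq_polylogOne_word hk1, mzv_eq_polylogOne_word hl1, polylogOne_mul_polylogOne hk' hl',
    Finsupp.linearCombination_apply, Finsupp.sum]
  refine Finset.sum_congr rfl fun w hw => ?_
  rw [mzv_wordToIndex (hk'.of_mem_support_shuffle hl' hw).head?_ne, zsmul_eq_mul]
end
end

section
/- Harmonic (stuffle) product formula for multiple harmonic sums: for every positive integer N and all indices k, l, one has ζ_N(k)·ζ_N(l) = Σ_h b_h·ζ_N(h), where k∗l = Σ_h b_h·h is the harmonic product, a formal ℤ-linear combination of indices defined recursively by ∅∗l = l, k∗∅ = k, and (k⌢(a)) ∗ (l⌢(b)) = ((k∗(l⌢(b)))⌢(a)) + (((k⌢(a))∗l)⌢(b)) + ((k∗l)⌢(a+b)), where ⌢ denotes appending an entry at the end. -/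
open scoped Classical

noncomputable section

/-- The multiple harmonic sum `ζ_N(k) = Σ_{0 < n₁ < ⋯ < nₐ ≤ N} ∏ nᵢ^(-kᵢ)`,
as a rational number (`ζ_N(∅) = 1`). -/
def mhs (N : ℕ) (k : List ℕ) : ℚ :=
  ∑ n ∈ Finset.univ.filter
      (fun n : Fin k.length → Fin (N + 1) => (∀ i, 0 < (n i : ℕ)) ∧ StrictMono n),
    ∏ i, (((n i : ℕ) : ℚ) ^ k.get i)⁻¹

/-- Auxiliary recursion for the harmonic product, on reversed indices
(`cons` corresponds to appending an entry at the end of the index). -/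
def harmRev : List ℕ → List ℕ → (List ℕ →₀ ℤ)
  | [], l => Finsupp.single l 1
  | a :: k, [] => Finsupp.single (a :: k) 1
  | a :: k, b :: l =>
      (harmRev k (b :: l)).mapDomain (List.cons a) +
        (harmRev (a :: k) l).mapDomain (List.cons b) +
        (harmRev k l).mapDomain (List.cons (a + b))
  termination_by k l => k.length + l.length

/-- The harmonic (stuffle) product `k ∗ l` of two indices, as a formal
`ℤ`-linear combination of indices.  It satisfies `∅ ∗ l = l`, `k ∗ ∅ = k` and
`(k⌢a) ∗ (l⌢b) = ((k ∗ (l⌢b))⌢a) + (((k⌢a) ∗ l)⌢b) + ((k ∗ l)⌢(a+b))`. -/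
def harm (k l : List ℕ) : List ℕ →₀ ℤ :=
  (harmRev k.reverse l.reverse).mapDomain List.reverse

/-!
Put `M_s(k) = ∑ ∏ᵢ x_{nᵢ} ^ kᵢ`, summed over `n₁ < ⋯ < nₐ` in a finite totally ordered set `s`, for
arbitrary `x_n` in a commutative ring; multiple harmonic sums are the case `x_n = 1 / n`.
If `m` lies above `s`, an increasing tuple in `s ∪ {m}` can use `m` only as its last entry, so
`M_{s ∪ {m}}(k⌢a) = M_s(k⌢a) + M_s(k) x_m ^ a`. Multiplying two such expansions and applying the
product formula on `s`, the terms are those of the expansion of `M_{s ∪ {m}}` at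
`k⌢a ∗ l⌢b = (k ∗ l⌢b)⌢a + (k⌢a ∗ l)⌢b + (k ∗ l)⌢(a + b)`.
-/

lemma harm_nil_left (l : List ℕ) : harm [] l = Finsupp.single l 1 := by
  simp [harm, harmRev, Finsupp.mapDomain_single]

lemma harm_nil_right (k : List ℕ) : harm k [] = Finsupp.single k 1 := by
  rcases k.eq_nil_or_concat' with rfl | ⟨k, a, rfl⟩ <;>
    simp [harm, harmRev, Finsupp.mapDomain_single]

lemma mapDomain_reverse_mapDomain_cons {α M : Type*} [AddCommMonoid M] (a : α)
    (p : List α →₀ M) :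
    (p.mapDomain (List.cons a)).mapDomain List.reverse =
      (p.mapDomain List.reverse).mapDomain (· ++ [a]) := by
  simp only [← Finsupp.mapDomain_comp, Function.comp_def, List.reverse_cons]

lemma harm_append_singleton (k l : List ℕ) (a b : ℕ) :
    harm (k ++ [a]) (l ++ [b]) =
      (harm k (l ++ [b])).mapDomain (· ++ [a]) + (harm (k ++ [a]) l).mapDomain (· ++ [b]) +
        (harm k l).mapDomain (· ++ [a + b]) := by
  simp only [harm, List.reverse_append, List.reverse_singleton, List.singleton_append, harmRev,
    Finsupp.mapDomain_add, mapDomain_reverse_mapDomain_cons]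

lemma strictMono_snoc_iff {α : Type*} [Preorder α] {n : ℕ} {t : Fin n → α} {m : α} :
    StrictMono (Fin.snoc t m : Fin (n + 1) → α) ↔ StrictMono t ∧ ∀ i, t i < m := by
  simp [← Fin.insertNth_last', Fin.strictMono_insertNth_iff, Fin.castSucc_lt_last]

variable {ι R : Type*} [LinearOrder ι]

section CommSemiring

variable [CommSemiring R]

/-- The sum of `∏ i, f i (t i)` over the strictly increasing `n`-tuples `t` with entries in `s`. The
exponents of an index are encoded in `f`, so that deleting the last one is `Fin.init f`. -/
def strictMonoSum {n : ℕ} (s : Finset ι) (f : Fin n → ι → R) : R :=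
  ∑ t ∈ Fintype.piFinset fun _ : Fin n ↦ s with StrictMono t, ∏ i, f i (t i)

lemma strictMonoSum_succ {n : ℕ} (s : Finset ι) (f : Fin (n + 1) → ι → R) :
    strictMonoSum s f =
      ∑ m ∈ s, strictMonoSum {i ∈ s | i < m} (Fin.init f) * f (Fin.last n) m := by
  simp only [strictMonoSum, Finset.sum_mul, Finset.sum_sigma']
  refine Finset.sum_bij' (fun t _ ↦ ⟨t (Fin.last n), Fin.init t⟩)
    (fun p _ ↦ Fin.snoc p.2 p.1) ?_ ?_ ?_ ?_ ?_
  · intro t ht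
    rw [← Fin.snoc_init_self t] at ht
    simp only [Finset.mem_filter, Fintype.mem_piFinset, strictMono_snoc_iff, Fin.forall_fin_succ',
      Fin.snoc_castSucc, Fin.snoc_last] at ht
    simp_all
  · rintro ⟨m, t⟩ ht
    simp_all [strictMono_snoc_iff, Fin.forall_fin_succ']
  · simp
  · simp
  · intro t _
    exact Fin.prod_univ_castSucc _

lemma strictMonoSum_comp_cast {n m : ℕ} (s : Finset ι) (h : n = m) (f : Fin m → ι → R) :
    strictMonoSum s (f ∘ Fin.cast h) = strictMonoSum s f := by
  subst h
  rfl

/-- The monomial quasisymmetric function with exponents `k` in the variables `x i`, `i ∈ s`, that is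
`∑ ∏ⱼ x (tⱼ) ^ kⱼ` over the strictly increasing tuples `t` in `s`. Multiple harmonic sums are the
case `x n = n⁻¹`. -/
def monomialQuasisymm (s : Finset ι) (x : ι → R) (k : List ℕ) : R :=
  strictMonoSum s fun j i ↦ x i ^ k.get j

lemma monomialQuasisymm_nil (s : Finset ι) (x : ι → R) : monomialQuasisymm s x [] = 1 := by
  simp [monomialQuasisymm, strictMonoSum, Subsingleton.strictMono]

lemma monomialQuasisymm_ofFn {n : ℕ} (s : Finset ι) (x : ι → R) (c : Fin n → ℕ) :
    monomialQuasisymm s x (List.ofFn c) = strictMonoSum s fun j i ↦ x i ^ c j := by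
  simp only [monomialQuasisymm, List.get_ofFn]
  exact strictMonoSum_comp_cast s List.length_ofFn fun j i ↦ x i ^ c j

lemma monomialQuasisymm_append_singleton (s : Finset ι) (x : ι → R) (k : List ℕ) (a : ℕ) :
    monomialQuasisymm s x (k ++ [a]) =
      ∑ m ∈ s, monomialQuasisymm {i ∈ s | i < m} x k * x m ^ a := by
  have append_eq_ofFn : k ++ [a] = List.ofFn (Fin.snoc k.get a : Fin (k.length + 1) → ℕ) := by
    rw [List.ofFn_succ']
    simp
  rw [append_eq_ofFn, monomialQuasisymm_ofFn, strictMonoSum_succ]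
  simp only [Fin.init_def, Fin.snoc_castSucc, Fin.snoc_last, monomialQuasisymm]

lemma monomialQuasisymm_insert {s : Finset ι} {m : ι} (hm : ∀ i ∈ s, i < m) (x : ι → R)
    (k : List ℕ) (a : ℕ) :
    monomialQuasisymm (insert m s) x (k ++ [a]) =
      monomialQuasisymm s x (k ++ [a]) + monomialQuasisymm s x k * x m ^ a := by
  have below_max : {i ∈ insert m s | i < m} = s := by
    rw [Finset.filter_insert, if_neg (lt_irrefl m), Finset.filter_true_of_mem hm]
  have below_old : ∀ j ∈ s, {i ∈ insert m s | i < j} = {i ∈ s | i < j} := fun j hj ↦ by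
    rw [Finset.filter_insert, if_neg (hm j hj).not_gt]
  rw [monomialQuasisymm_append_singleton, monomialQuasisymm_append_singleton,
    Finset.sum_insert fun h ↦ lt_irrefl m (hm m h), below_max, add_comm]
  exact congrArg (· + _) (Finset.sum_congr rfl fun j hj ↦ by rw [below_old j hj])

end CommSemiring

section CommRing

variable [CommRing R]

lemma linearCombination_monomialQuasisymm_empty (x : ι → R) (p : List ℕ →₀ ℤ) (a : ℕ) :
    Finsupp.linearCombination ℤ (monomialQuasisymm ∅ x) (p.mapDomain (· ++ [a])) = 0 := by
  rw [Finsupp.linearCombination_mapDomain, Finsupp.linearCombination_apply]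
  simp [monomialQuasisymm_append_singleton]

lemma linearCombination_monomialQuasisymm_insert {s : Finset ι} {m : ι} (hm : ∀ i ∈ s, i < m)
    (x : ι → R) (p : List ℕ →₀ ℤ) (a : ℕ) :
    Finsupp.linearCombination ℤ (monomialQuasisymm (insert m s) x) (p.mapDomain (· ++ [a])) =
      Finsupp.linearCombination ℤ (monomialQuasisymm s x) (p.mapDomain (· ++ [a])) +
        Finsupp.linearCombination ℤ (monomialQuasisymm s x) p * x m ^ a := by
  rw [Finsupp.linearCombination_mapDomain, Finsupp.linearCombination_mapDomain]
  simp only [Finsupp.linearCombination_apply, Function.comp_apply, monomialQuasisymm_insert hm,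
    smul_add, Finsupp.sum_add, Finsupp.sum_mul, smul_mul_assoc]

lemma monomialQuasisymm_mul (s : Finset ι) (x : ι → R) (k l : List ℕ) :
    monomialQuasisymm s x k * monomialQuasisymm s x l =
      Finsupp.linearCombination ℤ (monomialQuasisymm s x) (harm k l) := by
  induction s using Finset.induction_on_max generalizing k l with
  | empty =>
    rcases k.eq_nil_or_concat' with rfl | ⟨k, a, rfl⟩
    · simp [harm_nil_left, monomialQuasisymm_nil]
    rcases l.eq_nil_or_concat' with rfl | ⟨l, b, rfl⟩
    · simp [harm_nil_right, monomialQuasisymm_nil]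
    simp only [harm_append_singleton, map_add, linearCombination_monomialQuasisymm_empty,
      monomialQuasisymm_append_singleton, Finset.sum_empty, mul_zero, add_zero]
  | insert m s hm ih =>
    rcases k.eq_nil_or_concat' with rfl | ⟨k, a, rfl⟩
    · simp [harm_nil_left, monomialQuasisymm_nil]
    rcases l.eq_nil_or_concat' with rfl | ⟨l, b, rfl⟩
    · simp [harm_nil_right, monomialQuasisymm_nil]
    have ih_append := ih (k ++ [a]) (l ++ [b])
    rw [harm_append_singleton, map_add, map_add] at ih_append ⊢
    simp only [linearCombination_monomialQuasisymm_insert hm, monomialQuasisymm_insert hm, ← ih]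
    linear_combination ih_append

theorem harmonic_product_formula_general (s : Finset ι) (x : ι → R) (k l : List ℕ) :
    monomialQuasisymm s x k * monomialQuasisymm s x l =
      ∑ h ∈ (harm k l).support, (harm k l h : R) * monomialQuasisymm s x h := by
  simp only [monomialQuasisymm_mul, Finsupp.linearCombination_apply, Finsupp.sum, zsmul_eq_mul]

end CommRing

lemma mhs_eq_monomialQuasisymm (N : ℕ) (k : List ℕ) :
    mhs N k = monomialQuasisymm (Finset.Ioi (0 : Fin (N + 1))) (fun n ↦ ((n : ℕ) : ℚ)⁻¹) k := by
  simp only [mhs, monomialQuasisymm, strictMonoSum, inv_pow]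
  congr 1
  ext n
  simp [Nat.pos_iff_ne_zero]

/-- **Harmonic (stuffle) product formula for multiple harmonic sums.**
For every positive integer `N` and all indices `k`, `l`,
`ζ_N(k)·ζ_N(l) = Σ_h b_h ζ_N(h)` where `k ∗ l = Σ_h b_h h`. -/
theorem harmonic_product_formula (N : ℕ) (hN : 0 < N) (k l : List ℕ)
    (hk1 : ∀ i ∈ k, 1 ≤ i) (hl1 : ∀ i ∈ l, 1 ≤ i) :
    mhs N k * mhs N l =
      ∑ h ∈ (harm k l).support, ((harm k l h : ℤ) : ℚ) * mhs N h := by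
  simpa only [mhs_eq_monomialQuasisymm] using harmonic_product_formula_general _ _ k l
end
end

section
/- Hoffman's identity: for every positive integer N and every nonempty index k=(k_1,…,k_a), one has Σ_{1≤n_1≤⋯≤n_a≤N} (−1)^{n_a−1}·binom(N, n_a)·∏_{i=1}^a n_i^{−k_i} = ζ*_N(k∨), where k∨ is the Hoffman dual of k. -/
open scoped Classical

noncomputable section

/-- Last value of a tuple, with default `d` for the empty tuple. -/
def lastD {c : ℕ} (d : ℕ) (f : Fin c → ℕ) : ℕ :=
  if h : 0 < c then f ⟨c - 1, Nat.sub_lt h Nat.one_pos⟩ else d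

/-- The multiple zeta-star harmonic sum
`ζ*_N(k) = Σ_{0 < n₁ ≤ ⋯ ≤ nₐ ≤ N} ∏ nᵢ^(-kᵢ)`, as a rational number. -/
def zetaStarN (N : ℕ) (k : List ℕ) : ℚ :=
  ∑ n ∈ Finset.univ.filter
      (fun n : Fin k.length → Fin (N + 1) => (∀ i, 0 < (n i : ℕ)) ∧ Monotone n),
    ∏ i, (((n i : ℕ) : ℚ) ^ k.get i)⁻¹

/-- The left-hand side of Hoffman's identity:
`H*_N(k) = Σ_{1 ≤ n₁ ≤ ⋯ ≤ nₐ ≤ N} (-1)^(nₐ-1) · binom(N, nₐ) · ∏ nᵢ^(-kᵢ)`. -/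
def hoffmanSum (N : ℕ) (k : List ℕ) : ℚ :=
  ∑ n ∈ Finset.univ.filter
      (fun n : Fin k.length → Fin (N + 1) => (∀ i, 0 < (n i : ℕ)) ∧ Monotone n),
    (-1 : ℚ) ^ (lastD 0 (fun i => (n i : ℕ)) - 1) *
      (N.choose (lastD 0 fun i => (n i : ℕ)) : ℚ) *
      ∏ i, (((n i : ℕ) : ℚ) ^ k.get i)⁻¹

/-- The set of partial sums `S(k) = {k₁, k₁+k₂, …, k₁+⋯+k_{a-1}}` of an index. -/
def cuts (k : List ℕ) : Finset ℕ :=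
  ((k.dropLast.scanl (· + ·) 0).tail).toFinset

/-- The composition of `w` whose set of partial sums is the given set `s ⊆ {1,…,w-1}`. -/
def compOfCuts (w : ℕ) (s : Finset ℕ) : List ℕ :=
  List.zipWith (· - ·) ((s.sort (· ≤ ·)) ++ [w]) (0 :: s.sort (· ≤ ·))

/-- The Hoffman dual `k∨` of a nonempty index `k` of weight `w`: the unique index of
weight `w` with `S(k∨) = {1,…,w-1} \ S(k)`. -/
def hoffmanDual (k : List ℕ) : List ℕ :=
  compOfCuts k.sum ((Finset.Icc 1 (k.sum - 1)) \ cuts k)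

/-!
Write `Z k` and `H k` for the sequences `N ↦ ζ*_N(k)` and `N ↦ hoffmanSum N k`. Let `S` be the
operator of partial sums `(S f)(N) = f(1) + ⋯ + f(N)`, `∇` the backward difference, `D` the division
`(D f)(n) = f(n) / n`, and `T` the alternating binomial transform. Splitting off the largest
summation variable gives `Z (l, a) = S Dᵃ (Z l)` and `H (l, a) = T Dᵃ (Z l)`, also for `a = 0`.

Pascal's rule yields `T S = ∇ T`, and with `(N + 1) binom(N, i) = (i + 1) binom(N + 1, i + 1)` also
`T D = S D T`. Hence `H (l, a + 1) = S D (H (l, a))` and `H (l, b, 1) = S D ∇ (H (l, b))`. Dually,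
increasing the last entry of `k` appends a `1` to `k∨`, which applies `S D` to `Z (k∨)`, while
appending a `1` to `k` increases the last entry of `k∨`, which applies `S D ∇`.
-/

section AlternatingBinomialTransform

variable {R : Type*} [CommRing R]

/-- The alternating binomial transform `N ↦ ∑_{n=1}^N (-1)^(n-1) binom(N, n) f(n)` of a sequence,
written with `n = i + 1` so that no exponent is a truncated subtraction. It sends the summands of a
star sum, grouped by their largest variable, to the corresponding sum of Hoffman. -/
def alternatingBinomialTransform (f : ℕ → R) (N : ℕ) : R :=
  ∑ i ∈ Finset.range N, (-1) ^ i * (N.choose (i + 1) : R) * f (i + 1)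

lemma alternatingBinomialTransform_succ_sub (f : ℕ → R) (N : ℕ) :
    alternatingBinomialTransform f (N + 1) - alternatingBinomialTransform f N =
      ∑ i ∈ Finset.range (N + 1), (-1) ^ i * (N.choose i : R) * f (i + 1) := by
  have extend : alternatingBinomialTransform f N =
      ∑ i ∈ Finset.range (N + 1), (-1) ^ i * (N.choose (i + 1) : R) * f (i + 1) := by
    simp [alternatingBinomialTransform, Finset.sum_range_succ]
  rw [extend, alternatingBinomialTransform, ← Finset.sum_sub_distrib]
  refine Finset.sum_congr rfl fun i _ => ?_
  rw [Nat.choose_succ_succ]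
  push_cast
  ring

lemma alternatingBinomialTransform_one_succ (N : ℕ) :
    alternatingBinomialTransform (fun _ => (1 : R)) (N + 1) = 1 := by
  have alternating : ∑ i ∈ Finset.range (N + 2), (-1 : R) ^ i * ((N + 1).choose i : R) = 0 :=
    mod_cast congrArg (Int.cast : ℤ → R) (Int.alternating_sum_range_choose_of_ne N.succ_ne_zero)
  rw [Finset.sum_range_succ'] at alternating
  simp only [pow_succ, mul_neg_one, neg_mul, Finset.sum_neg_distrib] at alternating
  simpa [alternatingBinomialTransform, neg_add_eq_zero] using alternating

lemma alternatingBinomialTransform_sum_range_succ (f : ℕ → R) (N : ℕ) :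
    alternatingBinomialTransform (fun n => ∑ i ∈ Finset.range n, f (i + 1)) (N + 1) =
      alternatingBinomialTransform f (N + 1) - alternatingBinomialTransform f N := by
  set g : ℕ → R := fun n => ∑ i ∈ Finset.range n, f (i + 1) with hg
  have g_succ (i : ℕ) : g (i + 1) = g i + f (i + 1) := Finset.sum_range_succ _ _
  have shifted : ∑ i ∈ Finset.range (N + 1), (-1) ^ i * (N.choose i : R) * g i =
      -alternatingBinomialTransform g N := by
    simp [Finset.sum_range_succ', hg, alternatingBinomialTransform, pow_succ]
  have increment : alternatingBinomialTransform g (N + 1) - alternatingBinomialTransform g N =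
      alternatingBinomialTransform f (N + 1) - alternatingBinomialTransform f N -
        alternatingBinomialTransform g N := by
    rw [alternatingBinomialTransform_succ_sub, alternatingBinomialTransform_succ_sub,
      sub_eq_add_neg, ← shifted, ← Finset.sum_add_distrib]
    exact Finset.sum_congr rfl fun i _ => by rw [g_succ]; ring
  exact sub_left_inj.mp increment

lemma alternatingBinomialTransform_div {K : Type*} [Field K] [CharZero K] (f : ℕ → K) (N : ℕ) :
    alternatingBinomialTransform (fun n => f n / n) N =
      ∑ i ∈ Finset.range N, alternatingBinomialTransform f (i + 1) / (i + 1 : ℕ) := by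
  induction N with
  | zero => simp [alternatingBinomialTransform]
  | succ N ih =>
    rw [Finset.sum_range_succ, ← ih, ← sub_eq_iff_eq_add', alternatingBinomialTransform_succ_sub,
      alternatingBinomialTransform, Finset.sum_div]
    refine Finset.sum_congr rfl fun i _ => ?_
    have absorption :
        ((N + 1 : ℕ) : K) * N.choose i = (N + 1).choose (i + 1) * ((i + 1 : ℕ) : K) :=
      mod_cast Nat.add_one_mul_choose_eq N i
    field_simp
    linear_combination f (i + 1) * absorption

end AlternatingBinomialTransform

section MonotoneTuples

lemma monotone_snoc_iff {α : Type*} [Preorder α] {c : ℕ} {n : Fin c → α} {m : α} :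
    Monotone (Fin.snoc n m : Fin (c + 1) → α) ↔ Monotone n ∧ ∀ i, n i ≤ m := by
  simp [Monotone, Fin.forall_fin_succ', forall_and, Fin.le_last]

/-- The tuples `1 ≤ n₁ ≤ ⋯ ≤ n_c ≤ N` of natural numbers. -/
def monotoneTuples (c N : ℕ) : Finset (Fin c → ℕ) :=
  {n ∈ Fintype.piFinset fun _ => Finset.Icc 1 N | Monotone n}

lemma mem_monotoneTuples {c N : ℕ} {n : Fin c → ℕ} :
    n ∈ monotoneTuples c N ↔ (∀ i, 1 ≤ n i ∧ n i ≤ N) ∧ Monotone n := by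
  simp [monotoneTuples]

lemma snoc_mem_monotoneTuples {c N : ℕ} {n : Fin c → ℕ} {m : ℕ} :
    (Fin.snoc n m : Fin (c + 1) → ℕ) ∈ monotoneTuples (c + 1) N ↔
      m ∈ Finset.Icc 1 N ∧ n ∈ monotoneTuples c m := by
  simp only [mem_monotoneTuples, monotone_snoc_iff, Fin.forall_fin_succ', Fin.snoc_castSucc,
    Fin.snoc_last, Finset.mem_Icc]
  grind

variable {M : Type*} [AddCommMonoid M]

lemma sum_monotoneTuples_succ (c N : ℕ) (F : (Fin (c + 1) → ℕ) → M) :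
    ∑ n ∈ monotoneTuples (c + 1) N, F n =
      ∑ i ∈ Finset.range N, ∑ n ∈ monotoneTuples c (i + 1), F (Fin.snoc n (i + 1)) := by
  have by_last : ∑ n ∈ monotoneTuples (c + 1) N, F n =
      ∑ m ∈ Finset.Icc 1 N, ∑ n ∈ monotoneTuples c m, F (Fin.snoc n m) := by
    rw [Finset.sum_sigma']
    refine Finset.sum_bij' (fun n _ => ⟨n (Fin.last c), Fin.init n⟩)
      (fun x _ => Fin.snoc (α := fun _ => ℕ) x.2 x.1) (fun n hn => ?_) (fun x hx => ?_)
      (fun n _ => by simp) (fun x _ => by simp) (fun n _ => by simp)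
    · rw [← Fin.snoc_init_self n] at hn
      simpa only [Finset.mem_sigma] using snoc_mem_monotoneTuples.mp hn
    · exact snoc_mem_monotoneTuples.mpr (Finset.mem_sigma.mp hx)
  rw [by_last, Finset.range_eq_Ico, ← Finset.Ico_add_one_right_eq_Icc,
    ← Finset.sum_Ico_add' _ 0 N 1]

lemma sum_monotone_fin_eq_sum_monotoneTuples (c N : ℕ) (F : (Fin c → ℕ) → M) :
    ∑ n : Fin c → Fin (N + 1) with (∀ i, 0 < (n i : ℕ)) ∧ Monotone n, F (fun i => n i) =
      ∑ n ∈ monotoneTuples c N, F n := by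
  refine Finset.sum_bij' (fun n _ i => n i)
    (fun n hn i => ⟨n i, Nat.lt_succ_of_le ((mem_monotoneTuples.mp hn).1 i).2⟩)
    (fun n hn => ?_) (fun n hn => ?_) (fun _ _ => rfl) (fun _ _ => rfl) (fun _ _ => rfl)
  · obtain ⟨pos, mono⟩ := (Finset.mem_filter.mp hn).2
    exact mem_monotoneTuples.mpr ⟨fun i => ⟨pos i, (n i).is_le⟩, mono⟩
  · obtain ⟨bounds, mono⟩ := mem_monotoneTuples.mp hn
    exact Finset.mem_filter.mpr ⟨Finset.mem_univ _, fun i => (bounds i).1, mono⟩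

end MonotoneTuples

section StarSums

lemma lastD_succ {c : ℕ} (d : ℕ) (n : Fin (c + 1) → ℕ) : lastD d n = n (Fin.last c) := by
  simp [lastD, Fin.last]

/-- The common form `∑_{1 ≤ n₁ ≤ ⋯ ≤ n_c ≤ N} φ(n_c) ∏ nᵢ^(-kᵢ)` of `zetaStarN` (`φ = 1`) and
`hoffmanSum`. The index is a function on `Fin c`, so that its last entry can be split off without
casts between types `Fin k.length`. -/
def weightedStarSum (φ : ℕ → ℚ) {c : ℕ} (N : ℕ) (k : Fin c → ℕ) : ℚ :=
  ∑ n ∈ monotoneTuples c N, φ (lastD 0 n) * ∏ i, ((n i : ℚ) ^ k i)⁻¹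

lemma zetaStarN_eq_weightedStarSum (N : ℕ) (k : List ℕ) :
    zetaStarN N k = weightedStarSum (fun _ => 1) N k.get := by
  simp only [weightedStarSum, ← sum_monotone_fin_eq_sum_monotoneTuples, one_mul]
  rfl

lemma hoffmanSum_eq_weightedStarSum (N : ℕ) (k : List ℕ) :
    hoffmanSum N k = weightedStarSum (fun n => (-1) ^ (n - 1) * N.choose n) N k.get := by
  simp only [weightedStarSum, ← sum_monotone_fin_eq_sum_monotoneTuples]
  rfl

lemma weightedStarSum_comp_cast (φ : ℕ → ℚ) {c d : ℕ} (h : c = d) (N : ℕ) (k : Fin d → ℕ) :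
    weightedStarSum φ N (k ∘ Fin.cast h) = weightedStarSum φ N k := by
  subst h
  rfl

lemma weightedStarSum_snoc (φ : ℕ → ℚ) {c : ℕ} (N : ℕ) (k : Fin c → ℕ) (a : ℕ) :
    weightedStarSum φ N (Fin.snoc k a : Fin (c + 1) → ℕ) =
      ∑ i ∈ Finset.range N,
        φ (i + 1) * (weightedStarSum (fun _ => 1) (i + 1) k / ((i + 1 : ℕ) : ℚ) ^ a) := by
  simp only [weightedStarSum, sum_monotoneTuples_succ, lastD_succ, Fin.prod_univ_castSucc,
    Fin.snoc_last, Fin.snoc_castSucc, one_mul, div_eq_mul_inv, Finset.sum_mul, Finset.mul_sum]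

lemma weightedStarSum_get_concat (φ : ℕ → ℚ) (N : ℕ) (l : List ℕ) (a : ℕ) :
    weightedStarSum φ N (l ++ [a]).get =
      ∑ i ∈ Finset.range N, φ (i + 1) * (zetaStarN (i + 1) l / ((i + 1 : ℕ) : ℚ) ^ a) := by
  have hlen : (l ++ [a]).length = l.length + 1 := by simp
  have get_eq : (l ++ [a]).get = (Fin.snoc l.get a : Fin (l.length + 1) → ℕ) ∘ Fin.cast hlen := by
    ext i
    simp [Fin.snoc, List.getElem_append]
  simp only [get_eq, weightedStarSum_comp_cast, weightedStarSum_snoc, zetaStarN_eq_weightedStarSum]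

lemma zetaStarN_nil (N : ℕ) : zetaStarN N [] = 1 := by
  simp [zetaStarN, Subsingleton.monotone]

lemma zetaStarN_concat (N : ℕ) (l : List ℕ) (a : ℕ) :
    zetaStarN N (l ++ [a]) =
      ∑ i ∈ Finset.range N, zetaStarN (i + 1) l / ((i + 1 : ℕ) : ℚ) ^ a := by
  simp only [zetaStarN_eq_weightedStarSum N (l ++ [a]), weightedStarSum_get_concat, one_mul]

lemma hoffmanSum_concat (N : ℕ) (l : List ℕ) (a : ℕ) :
    hoffmanSum N (l ++ [a]) =
      alternatingBinomialTransform (fun n => zetaStarN n l / (n : ℚ) ^ a) N := by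
  simp only [hoffmanSum_eq_weightedStarSum, weightedStarSum_get_concat, Nat.add_sub_cancel,
    alternatingBinomialTransform]

lemma zetaStarN_concat_succ (N : ℕ) (l : List ℕ) (a : ℕ) :
    zetaStarN N (l ++ [a + 1]) = ∑ i ∈ Finset.range N,
      (zetaStarN (i + 1) (l ++ [a]) - zetaStarN i (l ++ [a])) / (i + 1 : ℕ) := by
  rw [zetaStarN_concat]
  refine Finset.sum_congr rfl fun i _ => ?_
  rw [zetaStarN_concat, zetaStarN_concat, Finset.sum_range_succ_sub_sum, pow_succ, div_div]

lemma hoffmanSum_concat_succ (N : ℕ) (l : List ℕ) (a : ℕ) :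
    hoffmanSum N (l ++ [a + 1]) =
      ∑ i ∈ Finset.range N, hoffmanSum (i + 1) (l ++ [a]) / (i + 1 : ℕ) := by
  simp only [hoffmanSum_concat, pow_succ, ← div_div, alternatingBinomialTransform_div]

lemma hoffmanSum_singleton_zero (N : ℕ) : hoffmanSum (N + 1) [0] = 1 := by
  simpa [zetaStarN_nil, alternatingBinomialTransform_one_succ] using hoffmanSum_concat (N + 1) [] 0

lemma hoffmanSum_concat_zero (N : ℕ) (l : List ℕ) (b : ℕ) :
    hoffmanSum (N + 1) (l ++ [b] ++ [0]) =
      hoffmanSum (N + 1) (l ++ [b]) - hoffmanSum N (l ++ [b]) := by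
  simp only [hoffmanSum_concat, zetaStarN_concat, pow_zero, div_one]
  exact alternatingBinomialTransform_sum_range_succ (fun n => zetaStarN n l / (n : ℚ) ^ b) N

end StarSums

section HoffmanDual

lemma cuts_concat (l : List ℕ) (a : ℕ) :
    cuts (l ++ [a]) = ((l.scanl (· + ·) 0).tail).toFinset := by
  simp [cuts]

lemma cuts_concat_concat (l : List ℕ) (b a : ℕ) :
    cuts (l ++ [b] ++ [a]) = insert (l ++ [b]).sum (cuts (l ++ [b])) := by
  rw [cuts_concat, cuts_concat, List.scanl_append]
  ext x
  cases l <;> simp [List.sum_eq_foldl]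

lemma le_add_sum_of_mem_scanl {M : Type*} [AddMonoid M] [Preorder M] [CanonicallyOrderedAdd M]
    {l : List M} {c x : M} (hx : x ∈ l.scanl (· + ·) c) : x ≤ c + l.sum := by
  induction l generalizing c with
  | nil => simp_all
  | cons b l ih =>
    rw [List.scanl_cons, List.mem_cons] at hx
    rw [List.sum_cons]
    rcases hx with rfl | hx
    · exact le_self_add
    · exact (ih hx).trans_eq (add_assoc _ _ _)

lemma lt_sum_of_mem_cuts_concat {l : List ℕ} {a x : ℕ} (ha : 1 ≤ a) (hx : x ∈ cuts (l ++ [a])) :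
    x < (l ++ [a]).sum := by
  rw [cuts_concat, List.mem_toFinset] at hx
  have := le_add_sum_of_mem_scanl (List.mem_of_mem_tail hx)
  simp only [List.sum_append, List.sum_singleton]
  omega

lemma sort_insert_of_forall_lt {α : Type*} [LinearOrder α] {s : Finset α} {w : α}
    (hs : ∀ x ∈ s, x < w) : (insert w s).sort (· ≤ ·) = s.sort (· ≤ ·) ++ [w] := by
  have toFinset_eq : insert w s = (s.sort (· ≤ ·) ++ [w]).toFinset := by
    ext; simp
  have nodup : (s.sort (· ≤ ·) ++ [w]).Nodup := by
    simpa [List.nodup_append] using fun x hx => (hs x hx).ne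
  rw [toFinset_eq]
  convert (List.toFinset_sort (· ≤ ·) nodup).mpr ?_
  simpa [List.pairwise_append] using fun x hx => (hs x hx).le

lemma compOfCuts_succ_insert {w : ℕ} {s : Finset ℕ} (hs : ∀ x ∈ s, x < w) :
    compOfCuts (w + 1) (insert w s) = compOfCuts w s ++ [1] := by
  rw [compOfCuts, sort_insert_of_forall_lt hs, ← List.cons_append, List.zipWith_append (by simp)]
  simp [compOfCuts]

lemma exists_compOfCuts_eq_concat (s : Finset ℕ) :
    ∃ P, ∃ m ∈ insert 0 s, ∀ w, compOfCuts w s = P ++ [w - m] := by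
  obtain ⟨M, m, hM⟩ : ∃ M m, 0 :: s.sort (· ≤ ·) = M ++ [m] :=
    ⟨_, _, (List.dropLast_append_getLast (List.cons_ne_nil _ _)).symm⟩
  have hlen : (s.sort (· ≤ ·)).length = M.length := by simpa using congrArg List.length hM
  have hm : m ∈ 0 :: s.sort (· ≤ ·) := by simp [hM]
  refine ⟨List.zipWith (· - ·) (s.sort (· ≤ ·)) M, m, by simpa using hm, fun w => ?_⟩
  rw [compOfCuts, hM, List.zipWith_append hlen]
  rfl

lemma hoffmanDual_singleton_one : hoffmanDual [1] = [1] := by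
  simp [hoffmanDual, cuts, compOfCuts]

lemma hoffmanDual_concat_succ (l : List ℕ) {a : ℕ} (ha : 1 ≤ a) :
    hoffmanDual (l ++ [a + 1]) = hoffmanDual (l ++ [a]) ++ [1] := by
  have cuts_eq : cuts (l ++ [a + 1]) = cuts (l ++ [a]) := by rw [cuts_concat, cuts_concat]
  have sum_eq : (l ++ [a + 1]).sum = (l ++ [a]).sum + 1 := by simp [add_assoc]
  have sum_pos : 1 ≤ (l ++ [a]).sum := by simp only [List.sum_append, List.sum_singleton]; omega
  have sum_notMem : (l ++ [a]).sum ∉ cuts (l ++ [a]) :=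
    fun h => (lt_sum_of_mem_cuts_concat ha h).false
  rw [hoffmanDual, hoffmanDual, cuts_eq, sum_eq, ← compOfCuts_succ_insert (by grind),
    ← Finset.insert_sdiff_of_notMem _ sum_notMem, Nat.add_sub_cancel,
    Finset.insert_Icc_sub_one_right_eq_Icc sum_pos]

lemma exists_hoffmanDual_concat_one (l : List ℕ) {b : ℕ} (hb : 1 ≤ b) :
    ∃ P c, hoffmanDual (l ++ [b]) = P ++ [c] ∧ hoffmanDual (l ++ [b] ++ [1]) = P ++ [c + 1] := by
  have sum_pos : 1 ≤ (l ++ [b]).sum := by simp only [List.sum_append, List.sum_singleton]; omega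
  have sum_eq : (l ++ [b] ++ [1]).sum = (l ++ [b]).sum + 1 := by simp [add_assoc]
  have compl_eq : Finset.Icc 1 (l ++ [b]).sum \ cuts (l ++ [b] ++ [1]) =
      Finset.Icc 1 ((l ++ [b]).sum - 1) \ cuts (l ++ [b]) := by
    rw [cuts_concat_concat]
    grind
  obtain ⟨P, m, hm, comp_eq⟩ :=
    exists_compOfCuts_eq_concat (Finset.Icc 1 ((l ++ [b]).sum - 1) \ cuts (l ++ [b]))
  have m_le : m ≤ (l ++ [b]).sum := by grind
  refine ⟨P, (l ++ [b]).sum - m, comp_eq _, ?_⟩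
  rw [hoffmanDual, sum_eq, Nat.add_sub_cancel, compl_eq, comp_eq, Nat.sub_add_comm m_le]

end HoffmanDual

@[elab_as_elim]
lemma index_induction {P : List ℕ → Prop} (singleton_one : P [1])
    (concat_succ : ∀ l a, 1 ≤ a → P (l ++ [a]) → P (l ++ [a + 1]))
    (concat_one : ∀ l b, 1 ≤ b → P (l ++ [b]) → P (l ++ [b] ++ [1]))
    (k : List ℕ) (hk : k ≠ []) (hk1 : ∀ i ∈ k, 1 ≤ i) : P k := by
  induction k using List.reverseRecOn with
  | nil => exact absurd rfl hk
  | append_singleton l a ih =>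
    obtain ⟨hl, ha⟩ : (∀ i ∈ l, 1 ≤ i) ∧ 1 ≤ a := by simpa [or_imp, forall_and] using hk1
    clear hk hk1
    induction a, ha using Nat.le_induction with
    | base =>
      rcases List.eq_nil_or_concat' l with rfl | ⟨l, b, rfl⟩
      · exact singleton_one
      · exact concat_one l b (hl b (by simp)) (ih (by simp) hl)
    | succ a ha iha => exact concat_succ l a ha iha

/-- **Hoffman's identity.**  For every positive integer `N` and every nonempty index `k`,
`Σ_{1 ≤ n₁ ≤ ⋯ ≤ nₐ ≤ N} (-1)^(nₐ-1) binom(N, nₐ) ∏ nᵢ^(-kᵢ) = ζ*_N(k∨)`. -/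
theorem hoffman_identity (N : ℕ) (hN : 0 < N) (k : List ℕ)
    (hk : k ≠ []) (hk1 : ∀ i ∈ k, 1 ≤ i) :
    hoffmanSum N k = zetaStarN N (hoffmanDual k) := by
  suffices all_bounds : ∀ N, hoffmanSum N k = zetaStarN N (hoffmanDual k) from all_bounds N
  refine index_induction ?singleton_one ?concat_succ ?concat_one k hk hk1
  case singleton_one =>
    intro N
    calc
      hoffmanSum N [1] = ∑ i ∈ Finset.range N, hoffmanSum (i + 1) [0] / (i + 1 : ℕ) :=
        hoffmanSum_concat_succ N [] 0
      _ = ∑ i ∈ Finset.range N, zetaStarN (i + 1) [] / ((i + 1 : ℕ) : ℚ) ^ 1 := by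
        simp only [hoffmanSum_singleton_zero, zetaStarN_nil, pow_one]
      _ = zetaStarN N (hoffmanDual [1]) := by
        rw [hoffmanDual_singleton_one, ← zetaStarN_concat, List.nil_append]
  case concat_succ =>
    intro l a ha ih N
    simp only [hoffmanSum_concat_succ, ih, hoffmanDual_concat_succ l ha, zetaStarN_concat, pow_one]
  case concat_one =>
    intro l b hb ih N
    obtain ⟨P, c, dual_eq, dual_concat_one_eq⟩ := exists_hoffmanDual_concat_one l hb
    rw [dual_concat_one_eq, zetaStarN_concat_succ, hoffmanSum_concat_succ N (l ++ [b]) 0]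
    simp only [hoffmanSum_concat_zero, ih, dual_eq]
end
end

section
/- Cyclic sum formula for finite multiple zeta values: let p be a prime and k=(k_1,…,k_a) a nonempty index. For 0≤t≤a−1 write σ^t k = (k_{t+1},…,k_a,k_1,…,k_t). Then, in ℤ/pℤ, Σ_{t=0}^{a−1} [ ζ^{(p)}((σ^t k)_↑) + ζ^{(p)}(↑(σ^t k)) + ζ^{(p)}(←(σ^t k)) ] = Σ_{t=0}^{a−1} Σ_{j=0}^{(σ^t k)_a − 2} ζ^{(p)}( j+1, (σ^t k)_1, …, (σ^t k)_{a−1}, (σ^t k)_a − j ), where inner sums with (σ^t k)_a = 1 are empty. -/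
open scoped Classical

noncomputable section

/-- The finite multiple harmonic sum `ζ^{(p)}(k) = Σ_{0 < n₁ < ⋯ < n_d ≤ p-1} ∏ nᵢ^(-kᵢ)`
computed in `ZMod p` (the `nᵢ` range over nonzero residues). -/
def zetaP (p : ℕ) (k : List ℕ) : ZMod p :=
  ∑ n ∈ Finset.univ.filter
      (fun n : Fin k.length → Fin p => (∀ i, 0 < (n i : ℕ)) ∧ StrictMono n),
    ∏ i, (((n i : ℕ) : ZMod p)⁻¹) ^ k.get i

/-- `k_↑`: increase the last entry of an index by `1` (`∅_↑ = ∅`). -/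
def upLast : List ℕ → List ℕ
  | [] => []
  | k => k.dropLast ++ [k.getLast! + 1]

/-- `↑k`: increase the first entry of an index by `1` (`↑∅ = ∅`). -/
def upFirst : List ℕ → List ℕ
  | [] => []
  | a :: k => (a + 1) :: k

/-!
Attach to an index `k` the connected sum
`A(k) = ∑_{0 < n < n₁ < ⋯ < n_d < p} n₁^(-k₁) ⋯ n_d^(-k_d) / (n_d - n)`.
Expanding `q^(-x) / (q - n)` in partial fractions for the last variable `q = n_d` gives
`n^(-x) (1 / (q - n) - 1 / q)` minus the products `n^(-j-1) q^(-(x-j))`, which account for the right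
side of the formula. In characteristic `p` the harmonic numbers satisfy `H_{p-1-n} = H_{p-1} + H_n`,
so the sum of `1 / (q - n) - 1 / q` over `m < q < p` is `∑_{0 ≤ i < n} 1 / (m - i) + H_n`: the terms
with `i > 0` rebuild `A` at the rotated index, and those with `i = 0` together with `H_n` account
for the left side. Over a full cycle of rotations the values of `A` cancel.
-/

section FiniteSums

open Finset

variable {M : Type*} [AddCommMonoid M]

lemma sum_Ioo_Ioo_comm {α : Type*} [Preorder α] [LocallyFiniteOrder α]
    (a b : α) (f : α → α → M) :
    ∑ i ∈ Ioo a b, ∑ n ∈ Ioo i b, f i n = ∑ n ∈ Ioo a b, ∑ i ∈ Ioo a n, f i n := by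
  refine sum_comm' fun i n => ?_
  simp only [mem_Ioo]
  exact ⟨fun ⟨⟨hai, _⟩, hin, hnb⟩ => ⟨⟨hai, hin⟩, hai.trans hin, hnb⟩,
    fun ⟨⟨hai, hin⟩, _, hnb⟩ => ⟨⟨hai, hin.trans hnb⟩, hin, hnb⟩⟩

lemma sum_Ioo_eq_sum_fin (m N : ℕ) (f : ℕ → M) :
    ∑ n ∈ Ioo m N, f n = ∑ n : Fin N, if m < n then f n else 0 := by
  rw [Fin.sum_univ_eq_sum_range (fun n => if m < n then f n else 0), ← sum_filter]
  congr 1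
  ext n
  simp [and_comm]

lemma sum_rotate_add_one {α : Type*} (k : List α) (f : List α → M) :
    ∑ t ∈ range k.length, f (k.rotate (t + 1)) =
      ∑ t ∈ range k.length, f (k.rotate t) := by
  cases h : k.length with
  | zero => rfl
  | succ n =>
    rw [sum_range_succ, sum_range_succ', ← h, List.rotate_length, List.rotate_zero]

end FiniteSums

section NestedSum

open Finset

variable {ι R : Type*} [CommSemiring R]

/-- The operator `φ ↦ (m ↦ ∑_{m < n < N} w(n) φ(n))`, which sums out the last variable of a
nested sum truncated at `N`. -/
def tailSum (N : ℕ) (w : ℕ → R) : Module.End R (ℕ → R) where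
  toFun φ m := ∑ n ∈ Ioo m N, w n * φ n
  map_add' φ ψ := by ext; simp [mul_add, sum_add_distrib]
  map_smul' c φ := by ext; simp [mul_sum, mul_left_comm]

/-- The nested sum `∑_{m < n₁ < ⋯ < n_d < N} w_{l₁}(n₁) ⋯ w_{l_d}(n_d) φ(n_d)` as an operator taking
`φ` to a function of `m`, so that concatenation of indices becomes composition. For the empty
index it is the identity. -/
def nestedSum (N : ℕ) (w : ι → ℕ → R) (l : List ι) : Module.End R (ℕ → R) :=
  (l.map fun i => tailSum N (w i)).prod

lemma tailSum_apply (N : ℕ) (w φ : ℕ → R) (m : ℕ) :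
    tailSum N w φ m = ∑ n ∈ Ioo m N, w n * φ n :=
  rfl

lemma nestedSum_nil (N : ℕ) (w : ι → ℕ → R) : nestedSum N w [] = 1 :=
  rfl

lemma nestedSum_singleton (N : ℕ) (w : ι → ℕ → R) (i : ι) :
    nestedSum N w [i] = tailSum N (w i) := by
  simp [nestedSum]

lemma nestedSum_append (N : ℕ) (w : ι → ℕ → R) (l l' : List ι) (φ : ℕ → R) :
    nestedSum N w (l ++ l') φ = nestedSum N w l (nestedSum N w l' φ) := by
  simp [nestedSum, Module.End.mul_apply]

lemma nestedSum_cons_apply (N : ℕ) (w : ι → ℕ → R) (i : ι) (l : List ι) (φ : ℕ → R) (m : ℕ) :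
    nestedSum N w (i :: l) φ m = ∑ n ∈ Ioo m N, w i n * nestedSum N w l φ n := by
  simp [nestedSum, Module.End.mul_apply, tailSum_apply]

lemma nestedSum_congr {N : ℕ} {w : ι → ℕ → R} {l : List ι} {φ ψ : ℕ → R} {m : ℕ} (hm : m < N)
    (h : Set.EqOn φ ψ (Set.Ico m N)) : nestedSum N w l φ m = nestedSum N w l ψ m := by
  induction l generalizing m with
  | nil => exact h ⟨le_rfl, hm⟩
  | cons i l ih =>
    simp only [nestedSum_cons_apply]
    refine sum_congr rfl fun n hn => ?_
    obtain ⟨hmn, hnN⟩ := mem_Ioo.1 hn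
    rw [ih hnN (h.mono (Set.Ico_subset_Ico_left hmn.le))]

lemma sum_nestedSum_cons (N : ℕ) (w : ι → ℕ → R) (i : ι) (l : List ι) (φ : ℕ → ℕ → R) (a : ℕ) :
    ∑ m ∈ Ioo a N, nestedSum N w (i :: l) (φ m) m =
      ∑ n ∈ Ioo a N, w i n * ∑ m ∈ Ioo a n, nestedSum N w l (φ m) n := by
  simp only [nestedSum_cons_apply, mul_sum]
  exact sum_Ioo_Ioo_comm ..

lemma sum_strictMono_eq_nestedSum (N : ℕ) (w : ι → ℕ → R) (l : List ι) (m : ℕ) :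
    ∑ n : Fin l.length → Fin N with (∀ i, m < (n i : ℕ)) ∧ StrictMono n,
      ∏ i, w (l.get i) (n i) = nestedSum N w l 1 m := by
  induction l generalizing m with
  | nil => simp [nestedSum_nil, Subsingleton.strictMono]
  | cons a l ih =>
    have mem_cons (x : Fin N) (y : Fin l.length → Fin N) :
        ((∀ i, m < ((Fin.cons x y : Fin (l.length + 1) → Fin N) i : ℕ)) ∧
          StrictMono (Fin.cons x y : Fin (l.length + 1) → Fin N)) ↔
        m < (x : ℕ) ∧ (∀ i, (x : ℕ) < y i) ∧ StrictMono y := by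
      rw [Fin.strictMono_cons, Fin.forall_fin_succ]
      simp only [Fin.cons_zero, Fin.cons_succ, Fin.lt_def]
      exact ⟨fun ⟨⟨hx, _⟩, h⟩ => ⟨hx, h⟩, fun ⟨hx, h⟩ => ⟨⟨hx, fun i => hx.trans (h.1 i)⟩, h⟩⟩
    simp only [nestedSum_cons_apply, ← ih, sum_Ioo_eq_sum_fin, sum_filter]
    refine ((Fin.consEquiv (n := l.length) fun _ => Fin N).sum_comp _).symm.trans ?_
    rw [Fintype.sum_prod_type]
    refine sum_congr rfl fun x _ => ?_
    by_cases hx : m < (x : ℕ) <;>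
      simp [Fin.consEquiv, mem_cons, hx, mul_sum, Fin.prod_univ_succ]

end NestedSum

section HarmonicSum

open Finset

variable (K : Type*)

/-- The `n`-th harmonic number `1 + 1/2 + ⋯ + 1/n` in `K`. In characteristic `p` it is meaningful
for `n < p` only: later sums contain terms `1 / 0 = 0`. -/
def harmonicNumber [DivisionRing K] (n : ℕ) : K :=
  ∑ i ∈ range n, ((i + 1 : ℕ) : K)⁻¹

variable {K}

section DivisionRing

variable [DivisionRing K]

lemma harmonicNumber_succ (n : ℕ) :
    harmonicNumber K (n + 1) = harmonicNumber K n + ((n + 1 : ℕ) : K)⁻¹ :=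
  sum_range_succ ..

lemma harmonicNumber_eq_sum_Ioo_add {n : ℕ} (hn : 0 < n) :
    harmonicNumber K n = ∑ i ∈ Ioo 0 n, (i : K)⁻¹ + (n : K)⁻¹ := by
  obtain ⟨n, rfl⟩ := Nat.exists_eq_add_one.2 hn
  rw [harmonicNumber_succ, harmonicNumber, range_eq_Ico,
    sum_Ico_add' (fun i : ℕ => (i : K)⁻¹) 0 n 1]
  rfl

lemma sum_Ioo_inv_cast_sub {n m N : ℕ} (hnm : n ≤ m) (hmN : m < N) :
    ∑ q ∈ Ioo m N, ((q : K) - n)⁻¹ = harmonicNumber K (N - 1 - n) - harmonicNumber K (m - n) := by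
  obtain ⟨d, rfl⟩ := Nat.exists_eq_add_of_le hnm
  obtain ⟨e, rfl⟩ := Nat.exists_eq_add_of_lt hmN
  rw [show n + d + e + 1 - 1 - n = d + e by omega, Nat.add_sub_cancel_left, harmonicNumber,
    sum_range_add, harmonicNumber, add_sub_cancel_left, ← Ico_add_one_left_eq_Ioo,
    sum_Ico_eq_sum_range, show n + d + e + 1 - (n + d + 1) = e by omega]
  refine sum_congr rfl fun i _ => ?_
  congr 1
  push_cast
  abel

lemma sum_range_inv_cast_sub {n m : ℕ} (hnm : n ≤ m) :
    ∑ i ∈ range n, ((m : K) - i)⁻¹ = harmonicNumber K m - harmonicNumber K (m - n) := by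
  induction n with
  | zero => simp
  | succ n ih =>
    have hlast := harmonicNumber_succ (K := K) (m - (n + 1))
    rw [show m - (n + 1) + 1 = m - n by omega, Nat.cast_sub (by omega)] at hlast
    rw [sum_range_succ, ih (by omega), hlast]
    abel

-- Since `p - i = -i` in `K`, the last `i` summands of `H_{p-1}` are the negatives of those of
-- `H_i`.
lemma harmonicNumber_eq_add_of_add_add_one_eq {p : ℕ} [CharP K p] {i j : ℕ} (h : i + j + 1 = p) :
    harmonicNumber K j = harmonicNumber K (p - 1) + harmonicNumber K i := by
  induction i generalizing j with
  | zero => simp [harmonicNumber, ← h]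
  | succ i ih =>
    have hneg : ((j + 1 : ℕ) : K) = -((i + 1 : ℕ) : K) := by
      rw [eq_neg_iff_add_eq_zero, ← Nat.cast_add, show j + 1 + (i + 1) = p by omega,
        CharP.cast_eq_zero]
    have hj := ih (j := j + 1) (by omega)
    rw [harmonicNumber_succ, hneg, inv_neg] at hj
    rw [harmonicNumber_succ, ← add_assoc, ← hj]
    abel

lemma sum_Ioo_inv_cast_sub_sub_inv {p : ℕ} [CharP K p] {n m : ℕ} (hnm : n ≤ m) (hmp : m < p) :
    ∑ q ∈ Ioo m p, (((q : K) - n)⁻¹ - (q : K)⁻¹) =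
      ∑ i ∈ range n, ((m : K) - i)⁻¹ + harmonicNumber K n := by
  have hq : ∑ q ∈ Ioo m p, (q : K)⁻¹ = harmonicNumber K (p - 1) - harmonicNumber K m := by
    simpa using sum_Ioo_inv_cast_sub (K := K) (Nat.zero_le m) hmp
  rw [sum_sub_distrib, hq, sum_Ioo_inv_cast_sub hnm hmp, sum_range_inv_cast_sub hnm,
    harmonicNumber_eq_add_of_add_add_one_eq (show n + (p - 1 - n) + 1 = p by omega)]
  abel

end DivisionRing

section Field

variable [Field K]

lemma inv_pow_mul_inv_sub {n q : K} (hn : n ≠ 0) (hq : q ≠ 0) (hnq : q - n ≠ 0) (x : ℕ) :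
    q⁻¹ ^ (x + 1) * (q - n)⁻¹ = n⁻¹ ^ (x + 1) * ((q - n)⁻¹ - q⁻¹) -
      ∑ j ∈ range x, n⁻¹ ^ (j + 1) * q⁻¹ ^ (x + 1 - j) := by
  have hinv : (n⁻¹ - q⁻¹) * (q - n)⁻¹ = n⁻¹ * q⁻¹ := by field_simp
  have hsum : ∑ j ∈ range (x + 1), n⁻¹ ^ (j + 1) * q⁻¹ ^ (x + 1 - j) =
      n⁻¹ * q⁻¹ * ∑ j ∈ range (x + 1), n⁻¹ ^ j * q⁻¹ ^ (x + 1 - 1 - j) := by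
    rw [mul_sum]
    refine sum_congr rfl fun j hj => ?_
    have hjx : x + 1 - j = x + 1 - 1 - j + 1 := by have := mem_range.1 hj; omega
    rw [hjx]
    ring
  have hgeom := geom_sum₂_mul n⁻¹ q⁻¹ (x + 1)
  rw [sum_range_succ, Nat.add_sub_cancel_left] at hsum
  linear_combination hsum + (q - n)⁻¹ * hgeom -
    (∑ j ∈ range (x + 1), n⁻¹ ^ j * q⁻¹ ^ (x + 1 - 1 - j)) * hinv

variable (K)

/-- The weight `n ↦ n⁻ᵏ` of multiple harmonic sums. -/
def invPow (k n : ℕ) : K :=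
  (n : K)⁻¹ ^ k

/-- The function `m ↦ 1 / (m - n)` linking the innermost and outermost variables of a connected
sum. -/
def connector (n m : ℕ) : K :=
  ((m : K) - n)⁻¹

/-- The sum `∑_{0 < n < n₁ < ⋯ < n_d < p} n₁^(-k₁) ⋯ n_d^(-k_d) / (n_d - n)`. For the empty index
`n_d` is read as `n`, and every term is `1 / 0 = 0`. -/
def connectedSum (p : ℕ) (k : List ℕ) : K :=
  ∑ n ∈ Ioo 0 p, nestedSum p (invPow K) k (connector K n) n

variable {K}

lemma nestedSum_append_connector_zero (p : ℕ) (l : List ℕ) (x : ℕ) :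
    nestedSum p (invPow K) (l ++ [x]) (connector K 0) =
      nestedSum p (invPow K) (l ++ [x + 1]) 1 := by
  rw [nestedSum_append, nestedSum_append]
  congr 1
  ext m
  simp [nestedSum_singleton, tailSum_apply, invPow, connector, pow_succ]

variable {p : ℕ} [CharP K p]

lemma tailSum_invPow_connector (x : ℕ) {n : ℕ} (hn : 0 < n) :
    Set.EqOn (tailSum p (invPow K (x + 1)) (connector K n))
      (invPow K (x + 1) n • (∑ i ∈ range n, connector K i + harmonicNumber K n • 1) -
        ∑ j ∈ range x, invPow K (j + 1) n • tailSum p (invPow K (x + 1 - j)) 1)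
      (Set.Ico n p) := by
  rintro m ⟨hnm, hmp⟩
  have cast_ne {i j : ℕ} (hij : i < j) (hj : j < p) : (j : K) ≠ i := fun h =>
    hij.ne' (CharP.natCast_injOn_Iio K p hj (hij.trans hj) h)
  have hfrac : ∀ q ∈ Ioo m p, invPow K (x + 1) q * connector K n q =
      invPow K (x + 1) n * (((q : K) - n)⁻¹ - (q : K)⁻¹) -
        ∑ j ∈ range x, invPow K (j + 1) n * invPow K (x + 1 - j) q := by
    intro q hq
    obtain ⟨hmq, hqp⟩ := mem_Ioo.1 hq
    exact inv_pow_mul_inv_sub (by simpa using cast_ne hn (hnm.trans_lt hmp))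
      (by simpa using cast_ne (by omega : 0 < q) hqp)
      (sub_ne_zero.2 (cast_ne (hnm.trans_lt hmq) hqp)) x
  rw [tailSum_apply, sum_congr rfl hfrac, sum_sub_distrib, ← mul_sum,
    sum_Ioo_inv_cast_sub_sub_inv hnm hmp, sum_comm]
  simp [tailSum_apply, connector, mul_sum, mul_add]

lemma nestedSum_append_connector (l : List ℕ) (x : ℕ) {n : ℕ} (hn : n ∈ Ioo 0 p) :
    nestedSum p (invPow K) (l ++ [x + 1]) (connector K n) n =
      invPow K (x + 1) n * (nestedSum p (invPow K) l (connector K 0) n +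
        ∑ i ∈ Ioo 0 n, nestedSum p (invPow K) l (connector K i) n +
        harmonicNumber K n * nestedSum p (invPow K) l 1 n) -
      ∑ j ∈ range x,
        invPow K (j + 1) n * nestedSum p (invPow K) (l ++ [x + 1 - j]) 1 n := by
  obtain ⟨hn0, hnp⟩ := mem_Ioo.1 hn
  simp only [nestedSum_append, nestedSum_singleton]
  rw [nestedSum_congr hnp (tailSum_invPow_connector x hn0), range_eq_Ico,
    ← add_sum_Ioo_eq_sum_Ico hn0]
  simp [mul_add]

lemma connectedSum_append_add_sum (l : List ℕ) (x : ℕ) :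
    connectedSum K p (l ++ [x + 1]) +
        ∑ j ∈ range x, nestedSum p (invPow K) ((j + 1) :: (l ++ [x + 1 - j])) 1 0 =
      connectedSum K p ((x + 1) :: l) +
        (nestedSum p (invPow K) ((x + 1) :: l) (connector K 0) 0 +
          nestedSum p (invPow K) ((x + 2) :: l) 1 0 +
          nestedSum p (invPow K) (1 :: (x + 1) :: l) 1 0) := by
  have hone : nestedSum p (invPow K) (1 :: (x + 1) :: l) 1 0 =
      ∑ n ∈ Ioo 0 p, invPow K (x + 1) n *
        ∑ i ∈ Ioo 0 n, (i : K)⁻¹ * nestedSum p (invPow K) l 1 n := by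
    have h := sum_nestedSum_cons p (invPow K) (x + 1) l (fun i => (i : K)⁻¹ • 1) 0
    simpa [nestedSum_cons_apply _ _ 1, invPow] using h
  rw [hone]
  simp only [connectedSum, sum_nestedSum_cons]
  simp only [nestedSum_cons_apply]
  rw [sum_comm, ← sum_add_distrib, ← sum_add_distrib, ← sum_add_distrib, ← sum_add_distrib]
  refine sum_congr rfl fun n hn => ?_
  rw [nestedSum_append_connector l x hn, harmonicNumber_eq_sum_Ioo_add (mem_Ioo.1 hn).1, ← sum_mul]
  simp only [invPow]
  ring

end Field

end HarmonicSum

lemma zetaP_eq_nestedSum (p : ℕ) [Fact p.Prime] (k : List ℕ) :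
    zetaP p k = nestedSum p (invPow (ZMod p)) k 1 0 :=
  sum_strictMono_eq_nestedSum p (invPow (ZMod p)) k 0

lemma upLast_append_singleton (l : List ℕ) (x : ℕ) : upLast (l ++ [x]) = l ++ [x + 1] := by
  rw [upLast] <;> simp

lemma zetaP_upLast (p : ℕ) [Fact p.Prime] {k : List ℕ} (hk : k ≠ []) :
    zetaP p (upLast k) = nestedSum p (invPow (ZMod p)) k (connector (ZMod p) 0) 0 := by
  obtain ⟨l, x, rfl⟩ := List.eq_nil_or_concat' k |>.resolve_left hk
  rw [upLast_append_singleton, zetaP_eq_nestedSum, nestedSum_append_connector_zero]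

lemma connectedSum_rotate_one_add_sum_zetaP (p : ℕ) [Fact p.Prime] {k : List ℕ} (hk : k ≠ [])
    (hk1 : 1 ≤ k.head hk) :
    connectedSum (ZMod p) p (k.rotate 1) +
        ∑ j ∈ Finset.range ((k.rotate 1).getLast! - 1),
          zetaP p ((j + 1) :: ((k.rotate 1).dropLast ++ [(k.rotate 1).getLast! - j])) =
      connectedSum (ZMod p) p k +
        (zetaP p (upLast k) + zetaP p (upFirst k) + zetaP p (1 :: k)) := by
  obtain ⟨x, l, rfl⟩ := List.exists_cons_of_ne_nil hk
  obtain ⟨x, rfl⟩ := Nat.exists_eq_add_one.2 hk1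
  rw [zetaP_upLast p hk]
  simpa [zetaP_eq_nestedSum, upFirst] using connectedSum_append_add_sum (K := ZMod p) l x

/-- **Cyclic sum formula for finite multiple zeta values.**
For a prime `p` and a nonempty index `k`, summing over all cyclic shifts
`σᵗk = (k_{t+1},…,kₐ,k₁,…,k_t)`, in `ℤ/pℤ`:
`Σ_t [ζ^{(p)}((σᵗk)_↑) + ζ^{(p)}(↑(σᵗk)) + ζ^{(p)}(←(σᵗk))]
  = Σ_t Σ_{j=0}^{(σᵗk)ₐ - 2} ζ^{(p)}(j+1, (σᵗk)₁, …, (σᵗk)_{a-1}, (σᵗk)ₐ - j)`. -/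
theorem cyclic_sum_formula_fmzv (p : ℕ) (hp : p.Prime) (k : List ℕ)
    (hk : k ≠ []) (hk1 : ∀ i ∈ k, 1 ≤ i) :
    ∑ t ∈ Finset.range k.length,
        (zetaP p (upLast (k.rotate t)) + zetaP p (upFirst (k.rotate t)) +
          zetaP p (1 :: k.rotate t)) =
      ∑ t ∈ Finset.range k.length, ∑ j ∈ Finset.range ((k.rotate t).getLast! - 1),
        zetaP p ((j + 1) :: ((k.rotate t).dropLast ++ [(k.rotate t).getLast! - j])) := by
  have : Fact p.Prime := ⟨hp⟩
  let A := connectedSum (ZMod p) p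
  let B (r : List ℕ) := ∑ j ∈ Finset.range (r.getLast! - 1),
    zetaP p ((j + 1) :: (r.dropLast ++ [r.getLast! - j]))
  let C (r : List ℕ) := zetaP p (upLast r) + zetaP p (upFirst r) + zetaP p (1 :: r)
  have rotate_step (t : ℕ) : A (k.rotate t) + C (k.rotate t) =
      A (k.rotate (t + 1)) + B (k.rotate (t + 1)) := by
    rw [← List.rotate_rotate]
    exact (connectedSum_rotate_one_add_sum_zetaP p (by simpa using hk)
      (hk1 _ (List.mem_rotate.1 (List.head_mem _)))).symm
  refine add_left_cancel (a := ∑ t ∈ Finset.range k.length, A (k.rotate t)) ?_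
  calc ∑ t ∈ Finset.range k.length, A (k.rotate t) + ∑ t ∈ Finset.range k.length, C (k.rotate t)
      = ∑ t ∈ Finset.range k.length,
          (A (k.rotate (t + 1)) + B (k.rotate (t + 1))) := by
        rw [← Finset.sum_add_distrib]
        exact Finset.sum_congr rfl fun t _ => rotate_step t
    _ = ∑ t ∈ Finset.range k.length, A (k.rotate t) +
          ∑ t ∈ Finset.range k.length, B (k.rotate t) := by
        rw [Finset.sum_add_distrib, sum_rotate_add_one k A, sum_rotate_add_one k B]
end
end
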